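/- arXiv:2206.05467 — 2 statements merged into one kernel-verified Lean document; each statement's English description precedes it below -/
import Mathlib

section
/- In the transversality setup with λ = 1 and f, T real analytic: either f is real analytically cohomologous to a constant (f = g∘T − g + c with g real analytic) and h_i ≡ h_j for all i, j ∈ Σ_d, or h_i ≢ h_j whenever i ≠ j in Σ_d. -/
/-- Iterated inverse branches `τ_{i,n} = τ_{i_n} ∘ ⋯ ∘ τ_{i_1}`, `τ_j(x) = τ(x+j)`. -/
def tauIt (tau : ℝ → ℝ) (i : ℕ → ℕ) : ℕ → ℝ → ℝ
  | 0 => id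
  | n + 1 => fun x => tau (tauIt tau i n x + i n)

/-- `h_i(x) = Σ_{n≥1} (f̂∘τ_{i,n}(x) − f̂∘τ_{i,n}(0))` (the case `λ = 1`). -/
noncomputable def hFunR (tau : ℝ → ℝ) (fhat : ℝ → ℝ) (i : ℕ → ℕ) (x : ℝ) : ℝ :=
  ∑' n : ℕ, (fhat (tauIt tau i (n + 1) x) - fhat (tauIt tau i (n + 1) 0))

open Filter Topology

lemma complexify {f : ℝ → ℝ} (hf : AnalyticAt ℝ f 0) :
    ∃ F : ℂ → ℂ, AnalyticAt ℂ F 0 ∧ ∀ᶠ x : ℝ in 𝓝 0, F x = f x := by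
  obtain ⟨p, hp⟩ := hf
  obtain ⟨r, hr0, hr⟩ := ENNReal.lt_iff_exists_nnreal_btwn.1 hp.radius_pos
  obtain ⟨C, hC, hb⟩ := p.norm_mul_pow_le_of_lt_radius hr
  let P : FormalMultilinearSeries ℂ ℂ ℂ := FormalMultilinearSeries.ofScalars ℂ (fun n => (p.coeff n : ℂ))
  have hP : (r : ENNReal) ≤ P.radius := by
    apply P.le_radius_of_bound C
    intro n
    have : ‖P n‖ = ‖p n‖ := by
      rw [FormalMultilinearSeries.ofScalars_norm]
      simp [FormalMultilinearSeries.norm_apply_eq_norm_coef]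
    rw [this]; exact hb n
  have hP0 : 0 < P.radius := lt_of_lt_of_le hr0 hP
  refine ⟨P.sum, ⟨P, (P.hasFPowerSeriesOnBall hP0).hasFPowerSeriesAt⟩, ?_⟩
  filter_upwards [hasFPowerSeriesAt_iff.1 hp] with x hx
  rw [zero_add] at hx
  have h2 := Complex.hasSum_ofReal.2 hx
  rw [← h2.tsum_eq]
  unfold FormalMultilinearSeries.sum
  congr 1; ext n
  simp [P, mul_comm]

lemma local_analytic {f τ : ℝ → ℝ} (hf : AnalyticAt ℝ f 0) (hτ : AnalyticAt ℝ τ 0)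
    (h0 : τ 0 = 0) {q : ℝ} (hq0 : 0 ≤ q) (hq : q < 1) (hc : ∀ x, |τ x| ≤ q * |x|) :
    AnalyticAt ℝ (fun x => ∑' n : ℕ, (f (τ^[n+1] x) - f 0)) 0 := by
  obtain ⟨F, hF, hFf⟩ := complexify hf
  obtain ⟨G, hG, hGτ⟩ := complexify hτ
  have hF0 : F 0 = f 0 := by simpa using hFf.self_of_nhds
  have hG0 : G 0 = 0 := by simpa [h0] using hGτ.self_of_nhds
  -- bounds
  obtain ⟨M, hM, hMF⟩ : ∃ M > 0, ∀ᶠ z : ℂ in 𝓝 0, ‖F z - F 0‖ ≤ M * ‖z‖ := by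
    have := hF.differentiableAt.isBigO_sub
    obtain ⟨M, hM, h⟩ := this.exists_pos
    refine ⟨M, hM, ?_⟩
    simpa using h.bound
  obtain ⟨s, hqs, hs1⟩ := exists_between hq
  have hs0 : 0 < s := lt_of_le_of_lt hq0 hqs
  have hGs : ∀ᶠ z : ℂ in 𝓝 0, ‖G z‖ ≤ s * ‖z‖ := by
    set c := deriv G 0
    have hd : HasDerivAt G c 0 := hG.differentiableAt.hasDerivAt
    have ho := hd.isLittleO
    have hε : 0 < (s - q) / 2 := by linarith
    have hb := ho.bound hε
    simp only [hG0, sub_zero, smul_eq_mul] at hb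
    have hcq : ‖c‖ ≤ q + (s - q) / 2 := by
      have ht : Tendsto (fun x : ℝ => (x : ℂ)) (𝓝 0) (𝓝 0) := by
        simpa using (Complex.continuous_ofReal.tendsto 0)
      have h1 := (ht.eventually hb).and hGτ
      obtain ⟨ε, he, hball⟩ := Metric.eventually_nhds_iff.1 h1
      have h2 := hball (y := ε / 2) (by rw [Real.dist_eq, sub_zero, abs_of_pos (by linarith)]; linarith)
      obtain ⟨h3, h4⟩ := h2
      have h5 := hc (ε/2)
      rw [h4] at h3
      have h6 : ‖((ε/2 : ℝ) : ℂ)‖ = ε/2 := by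
        rw [Complex.norm_real, Real.norm_eq_abs, abs_of_pos (by linarith)]
      rw [h6] at h3
      rw [abs_of_pos (show 0 < ε/2 by linarith)] at h5
      have h7 : ‖((ε/2 : ℝ) : ℂ) * c‖ ≤ ‖((τ (ε/2) : ℝ) : ℂ)‖ + (s-q)/2 * (ε/2) := by
        calc _ = ‖((τ (ε/2) : ℝ) : ℂ) - (((τ (ε/2) : ℝ) : ℂ) - ((ε/2 : ℝ) : ℂ) * c)‖ := by ring_nf
          _ ≤ _ := (norm_sub_le _ _).trans (by linarith)
      rw [norm_mul, h6, Complex.norm_real, Real.norm_eq_abs] at h7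
      have : ε/2 * ‖c‖ ≤ ε/2 * (q + (s-q)/2) := by nlinarith
      exact le_of_mul_le_mul_left this (by linarith)
    filter_upwards [hb] with z hz
    calc ‖G z‖ = ‖(G z - z * c) + z * c‖ := by ring_nf
      _ ≤ ‖G z - z * c‖ + ‖z * c‖ := norm_add_le _ _
      _ ≤ (s - q)/2 * ‖z‖ + ‖z‖ * (q + (s-q)/2) := by
          rw [norm_mul]; gcongr
      _ = s * ‖z‖ := by ring
  have hGd : ∀ᶠ z : ℂ in 𝓝 0, DifferentiableAt ℂ G z :=
    hG.eventually_analyticAt.mono fun z hz => hz.differentiableAt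
  have hFd : ∀ᶠ z : ℂ in 𝓝 0, DifferentiableAt ℂ F z :=
    hF.eventually_analyticAt.mono fun z hz => hz.differentiableAt
  obtain ⟨r, hr, hall⟩ := Metric.eventually_nhds_iff.1 (hGs.and (hGd.and (hFd.and hMF)))
  obtain ⟨r', hr', hall'⟩ := Metric.eventually_nhds_iff.1 (hGτ.and hFf)
  have hball : ∀ z ∈ Metric.ball (0:ℂ) r, ∀ n, G^[n] z ∈ Metric.ball (0:ℂ) r ∧ ‖G^[n] z‖ ≤ s^n * ‖z‖ := by
    intro z hz n
    induction n with
    | zero => simpa using hz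
    | succ n ih =>
      rw [Function.iterate_succ_apply']
      have h1 := (hall (y := G^[n] z) ih.1).1
      have h2 : ‖G (G^[n] z)‖ ≤ s^(n+1) * ‖z‖ := by
        rw [pow_succ]; nlinarith [ih.2]
      refine ⟨?_, h2⟩
      rw [mem_ball_zero_iff] at hz ⊢
      have : s^(n+1) ≤ 1 := pow_le_one₀ hs0.le hs1.le
      nlinarith [norm_nonneg z]
  have hdiffG : ∀ n, DifferentiableOn ℂ (G^[n]) (Metric.ball 0 r) := by
    intro n
    induction n with
    | zero => exact differentiableOn_id
    | succ n ih =>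
      rw [Function.iterate_succ']
      intro z hz
      exact ((hall (hball z hz n).1).2.1.comp_differentiableWithinAt z (ih z hz))
  have hH : DifferentiableOn ℂ (fun z => ∑' n : ℕ, (F (G^[n+1] z) - F 0)) (Metric.ball 0 r) := by
    apply Complex.differentiableOn_tsum_of_summable_norm (u := fun n => M * (s^(n+1) * r))
    · apply Summable.mul_left
      apply Summable.mul_right
      exact (summable_nat_add_iff 1).2 (summable_geometric_of_lt_one hs0.le hs1)
    · intro n z hz
      exact ((hall (hball z hz (n+1)).1).2.2.1.comp_differentiableWithinAt z (hdiffG (n+1) z hz)).sub_const _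
    · exact Metric.isOpen_ball
    · intro n z hz
      refine ((hall (hball z hz (n+1)).1).2.2.2).trans ?_
      have := (hball z hz (n+1)).2
      rw [mem_ball_zero_iff] at hz
      gcongr
      exact this.trans (by gcongr)
  have hHa := hH.analyticAt (Metric.ball_mem_nhds 0 hr)
  have hre : AnalyticAt ℝ (fun x : ℝ => (∑' n : ℕ, (F (G^[n+1] (x:ℂ)) - F 0)).re) 0 := by
    have h1 : AnalyticAt ℝ (fun x : ℝ => (x : ℂ)) 0 := Complex.ofRealCLM.analyticAt 0
    have h2 : AnalyticAt ℝ (fun z => ∑' n : ℕ, (F (G^[n+1] z) - F 0)) ((0:ℝ):ℂ) := by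
      simpa using hHa.restrictScalars
    have h3 := h2.comp (f := fun x : ℝ => (x : ℂ)) h1
    exact (Complex.reCLM.analyticAt _).comp h3
  refine hre.congr ?_
  filter_upwards [Metric.ball_mem_nhds (0:ℝ) hr'] with x hx
  have hxx : ∀ n, |τ^[n] x| < r' ∧ G^[n] (x:ℂ) = (τ^[n] x : ℝ) := by
    intro n
    induction n with
    | zero => simpa using hx
    | succ n ih =>
      rw [Function.iterate_succ_apply', Function.iterate_succ_apply']
      constructor
      · have := hc (τ^[n] x)
        nlinarith [abs_nonneg (τ^[n] x)]
      · rw [ih.2]; exact (hall' (y := τ^[n] x) (by simpa using ih.1)).1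
  have : ∀ n, F (G^[n+1] (x:ℂ)) - F 0 = ((f (τ^[n+1] x) - f 0 : ℝ) : ℂ) := by
    intro n
    rw [(hxx (n+1)).2, hF0, (hall' (y := τ^[n+1] x) (by simpa using (hxx (n+1)).1)).2]
    push_cast; rfl
  simp only [this]
  rw [← Complex.ofReal_tsum, Complex.ofReal_re]

lemma order_bound (d : ℕ) (hd : 2 ≤ d) : ∀ (l : ℕ) (D : ℤ) (N : ℕ), 0 < N → ¬ (d : ℤ) ∣ D →
    (d : ℤ)^l ∣ D * N → 2^l ≤ N := by
  intro l
  induction l with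
  | zero => intro D N hN _ _; simp; omega
  | succ l ih =>
    intro D N hN hD hdiv
    set e : ℤ := (Int.gcd D d : ℤ) with he
    have hd0 : (d : ℤ) ≠ 0 := by positivity
    have he0 : 0 < Int.gcd D d := Int.gcd_pos_of_ne_zero_right _ hd0
    obtain ⟨D1, hD1⟩ : e ∣ D := Int.gcd_dvd_left ..
    obtain ⟨d1, hd1⟩ : e ∣ (d : ℤ) := Int.gcd_dvd_right ..
    have hepos : 0 < e := by rw [he]; exact_mod_cast he0
    have hdpos : (0:ℤ) < d := by positivity
    have hd1pos : 0 < d1 := by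
      rw [hd1] at hdpos
      exact pos_of_mul_pos_right hdpos hepos.le
    have hd1ne : d1 ≠ 1 := by
      rintro rfl
      apply hD
      rw [hd1, mul_one]; exact ⟨D1, hD1⟩
    have hcop : IsCoprime d1 D1 := by
      rw [Int.isCoprime_iff_gcd_eq_one]
      have h := Int.gcd_mul_left e D1 d1
      rw [← hD1, ← hd1] at h
      have h2 : e.natAbs = Int.gcd D d := by rw [he]; simp
      rw [h2] at h
      have := Nat.eq_of_mul_eq_mul_left he0 ((mul_one _).trans h)
      rw [Int.gcd_comm]; exact this.symm
    have h1 : (d:ℤ)^l * d1 ∣ D1 * N := by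
      have : e * ((d:ℤ)^l * d1) ∣ e * (D1 * N) := by
        calc e * ((d:ℤ)^l * d1) = (d:ℤ)^(l+1) := by rw [pow_succ]; nth_rewrite 3 [hd1]; ring
          _ ∣ D * N := hdiv
          _ = e * (D1 * N) := by nth_rewrite 1 [hD1]; ring
      exact (mul_dvd_mul_iff_left hepos.ne').1 this
    have h2 : d1 ∣ (N:ℤ) := hcop.dvd_of_dvd_mul_left ((Dvd.intro_left _ rfl).trans h1)
    obtain ⟨N1, hN1⟩ := h2
    have hN1pos : 0 < N1 := by
      have : (0:ℤ) < N := by exact_mod_cast hN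
      rw [hN1] at this
      exact pos_of_mul_pos_right this hd1pos.le
    lift N1 to ℕ using hN1pos.le
    have h3 : (d:ℤ)^l ∣ D1 * N1 := by
      rw [hN1] at h1
      have : (d:ℤ)^l * d1 ∣ (D1 * N1) * d1 := by convert h1 using 1; ring
      exact (mul_dvd_mul_iff_right hd1pos.ne').1 this
    have h4 : ¬ (d:ℤ) ∣ D1 := fun h => hD (h.trans ⟨e, by rw [hD1]; ring⟩)
    have h5 := ih D1 N1 (by exact_mod_cast hN1pos) h4 h3
    have h6 : (2:ℤ)^(l+1) ≤ N := by
      rw [hN1, pow_succ]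
      have : (2:ℤ)^l ≤ N1 := by exact_mod_cast h5
      have h7 : 2 ≤ d1 := by omega
      have : (0:ℤ) ≤ 2^l := by positivity
      nlinarith
    exact_mod_cast h6

/-- sum over a full period does not depend on the starting point -/
lemma sum_shift_int (Q : ℤ → ℝ) (N : ℕ) (hQ : ∀ t, Q (t + N) = Q t) (a : ℤ) :
    ∑ t ∈ Finset.range N, Q (t + a) = ∑ t ∈ Finset.range N, Q t := by
  have key : ∀ a : ℤ, ∑ t ∈ Finset.range N, Q (t + (a + 1)) = ∑ t ∈ Finset.range N, Q (t + a) := by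
    intro a
    have h1 := Finset.sum_range_succ (fun t : ℕ => Q (t + a)) N
    have h2 := Finset.sum_range_succ' (fun t : ℕ => Q (t + a)) N
    rw [h1] at h2
    have h3 : Q ((N:ℤ) + a) = Q (((0:ℕ):ℤ) + a) := by
      rw [add_comm, hQ]; simp
    rw [h3] at h2
    have := add_right_cancel h2
    rw [this]
    apply Finset.sum_congr rfl
    intro t _
    congr 1; push_cast; ring
  induction a using Int.induction_on with
  | zero => simp
  | succ n ih => rw [key, ih]
  | pred n ih => rw [← ih, ← key]; simp

lemma sum_zmod (Q : ℤ → ℝ) (N : ℕ) [NeZero N] :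
    ∑ t ∈ Finset.range N, Q t = ∑ z : ZMod N, Q (z.val) := by
  symm
  apply Finset.sum_bij (fun (z : ZMod N) _ => z.val)
  · intro z _; simp [ZMod.val_lt]
  · intro a _ b _ h; exact ZMod.val_injective N h
  · intro b hb; exact ⟨(b : ZMod N), Finset.mem_univ _, ZMod.val_cast_of_lt (Finset.mem_range.1 hb)⟩
  · intro a _; rfl

lemma per_mul (Q : ℤ → ℝ) (N : ℤ) (hQ : ∀ t, Q (t + N) = Q t) (t k : ℤ) : Q (t + k * N) = Q t := by
  have : Function.Periodic Q N := hQ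
  have := this.int_mul k
  simpa using this t

lemma sum_perm (Q : ℤ → ℝ) (N : ℕ) (hN : 0 < N) (hQ : ∀ t, Q (t + N) = Q t) (u : ℤ)
    (hu : IsCoprime u N) :
    ∑ t ∈ Finset.range N, Q (t * u) = ∑ t ∈ Finset.range N, Q t := by
  have : NeZero N := ⟨hN.ne'⟩
  have hmod : ∀ a b : ℤ, (a : ZMod N) = b → Q a = Q b := by
    intro a b h
    rw [ZMod.intCast_eq_intCast_iff_dvd_sub] at h
    obtain ⟨k, hk⟩ := h
    have : b = a + k * N := by linarith
    rw [this, per_mul Q N hQ]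
  rw [sum_zmod Q N, sum_zmod (fun t => Q (t * u)) N]
  · have hun : IsUnit (u : ZMod N) := by
      obtain ⟨a, b, hab⟩ := hu
      apply IsUnit.of_mul_eq_one (a : ZMod N)
      have := congrArg (Int.cast : ℤ → ZMod N) hab
      push_cast at this
      simp at this
      rw [mul_comm]; exact this
    obtain ⟨v, hv⟩ := hun
    apply Fintype.sum_equiv (Units.mulRight v)
    intro z
    apply hmod
    simp [hv]

lemma sum_range_mul_period (Q : ℤ → ℝ) (N M : ℕ) (hQ : ∀ t, Q (t + N) = Q t) :
    ∑ t ∈ Finset.range (M * N), Q t = M * ∑ t ∈ Finset.range N, Q t := by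
  induction M with
  | zero => simp
  | succ M ih =>
    rw [add_mul, one_mul, Finset.sum_range_add, ih]
    have : ∀ x : ℕ, Q ((M * N + x : ℕ) : ℤ) = Q x := by
      intro x
      have := per_mul Q N hQ x M
      rw [← this]; congr 1; push_cast; ring
    simp only [this]
    push_cast; ring

lemma tele_bound {f W : ℝ → ℝ} {K : ℝ} (hK : 0 ≤ K) (hf : ∀ x y, |f x - f y| ≤ K * |x - y|)
    (hper : Function.Periodic f 1) (hW : Monotone W) (N : ℕ) (c : ℝ) (hc : 0 < c)
    (hWp : ∀ x, W (x + N * c) = W x + 1) (y z : ℝ) :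
    |∑ t ∈ Finset.range N, (f (W (y + t * c)) - f (W (z + t * c)))| ≤ K := by
  -- reduce y to [z, z + c)
  set q : ℤ := ⌊(y - z) / c⌋
  set y0 : ℝ := y - q * c with hy0
  have hq1 : z ≤ y0 := by
    have := Int.floor_le ((y - z) / c)
    rw [le_div_iff₀ hc] at this
    linarith
  have hq2 : y0 ≤ z + c := by
    have := (Int.lt_floor_add_one ((y - z) / c)).le
    rw [div_le_iff₀ hc] at this
    linarith
  have hs : ∑ t ∈ Finset.range N, f (W (y + t * c)) = ∑ t ∈ Finset.range N, f (W (y0 + t * c)) := by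
    have := sum_shift_int (fun t : ℤ => f (W (y0 + t * c))) N (by
      intro t
      show f (W (y0 + ((t + (N:ℤ) : ℤ) : ℝ) * c)) = _
      have h : y0 + ((t + (N:ℤ) : ℤ) : ℝ) * c = (y0 + t * c) + N * c := by push_cast; ring
      rw [h, hWp, hper]) q
    simp only [Int.cast_natCast] at this
    rw [← this]
    apply Finset.sum_congr rfl
    intro t _
    congr 2; push_cast; rw [hy0]; ring
  rw [Finset.sum_sub_distrib, hs, ← Finset.sum_sub_distrib]
  calc |∑ t ∈ Finset.range N, (f (W (y0 + t * c)) - f (W (z + t * c)))|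
      ≤ ∑ t ∈ Finset.range N, |f (W (y0 + t * c)) - f (W (z + t * c))| := Finset.abs_sum_le_sum_abs _ _
    _ ≤ ∑ t ∈ Finset.range N, K * (W (z + (t+1 : ℕ) * c) - W (z + t * c)) := by
        apply Finset.sum_le_sum
        intro t _
        refine (hf _ _).trans ?_
        have h1 : W (z + t * c) ≤ W (y0 + t * c) := hW (by linarith)
        have h2 : W (y0 + t * c) ≤ W (z + (t+1 : ℕ) * c) := hW (by push_cast; linarith)
        rw [abs_of_nonneg (by linarith)]
        gcongr
    _ = K * (W (z + N * c) - W (z + (0:ℕ) * c)) := by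
        rw [← Finset.mul_sum, Finset.sum_range_sub (fun t : ℕ => W (z + t * c))]
    _ = K := by rw [hWp]; simp

/-- the averaged bound -/
lemma avg_bound {f W : ℝ → ℝ} {K : ℝ} (hK : 0 ≤ K) (hf : ∀ x y, |f x - f y| ≤ K * |x - y|)
    (hper : Function.Periodic f 1) (hW : Monotone W) (d : ℕ) (hd : 2 ≤ d) (l L s : ℕ) (hlL : l ≤ L)
    (hsl : s ≤ l)
    (hWp : ∀ x, W (x + (d:ℝ)^l) = W x + 1) (D : ℤ) (hD : ¬ (d:ℤ) ∣ D) (y z : ℝ) :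
    |∑ t ∈ Finset.range (d^L), (f (W (y + t * ((d:ℝ)^s * D))) - f (W (z + t * ((d:ℝ)^s * D))))|
      ≤ d^L * (K * (1/2)^(l-s)) := by
  set E : ℤ := (d:ℤ)^s * D with hE
  have hd0 : 0 < d := by omega
  have hdl0 : ((d^l : ℕ) : ℤ) ≠ 0 := by positivity
  set c : ℕ := Int.gcd E (d^l : ℕ) with hc
  have hc0 : 0 < c := Int.gcd_pos_of_ne_zero_right _ hdl0
  obtain ⟨u, hu⟩ : (c:ℤ) ∣ E := Int.gcd_dvd_left ..
  obtain ⟨N, hN⟩ : c ∣ d^l := by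
    have : (c:ℤ) ∣ ((d^l : ℕ):ℤ) := Int.gcd_dvd_right ..
    exact_mod_cast this
  have hN0 : 0 < N := by
    rcases Nat.eq_zero_or_pos N with h | h
    · rw [h] at hN; simp at hN; omega
    · exact h
  have hcop : IsCoprime u (N:ℤ) := by
    rw [Int.isCoprime_iff_gcd_eq_one]
    have h := Int.gcd_mul_left c u N
    rw [← hu] at h
    have h2 : (c:ℤ) * N = ((d^l : ℕ) : ℤ) := by rw [hN]; push_cast; ring
    rw [h2, ← hc] at h
    simp only [Int.natAbs_natCast] at h
    exact (Nat.eq_of_mul_eq_mul_left hc0 ((mul_one _).trans h)).symm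
  have hNd : N ∣ d^L := (Dvd.intro_left c hN.symm).trans (pow_dvd_pow d hlL)
  obtain ⟨M, hM⟩ := hNd
  have hN2 : 2^(l-s) ≤ N := by
    apply order_bound d hd (l-s) D N hN0 hD
    have h1 : (d:ℤ)^l ∣ E * N := by
      refine ⟨u, ?_⟩
      have : (d:ℤ)^l = c * N := by exact_mod_cast hN
      rw [this, hu]; ring
    have h2 : (d:ℤ)^s * (d:ℤ)^(l-s) ∣ (d:ℤ)^s * (D * N) := by
      rw [← pow_add, Nat.add_sub_cancel' hsl, ← mul_assoc]; exact h1
    exact (mul_dvd_mul_iff_left (by positivity)).1 h2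
  have hcN : (N:ℝ) * c = (d:ℝ)^l := by
    have : ((d^l : ℕ):ℝ) = ((c * N : ℕ) : ℝ) := by rw [hN]
    push_cast at this; rw [this]; ring
  let Q : ℤ → ℝ := fun t => f (W (y + t * c)) - f (W (z + t * c))
  have hQ : ∀ t, Q (t + N) = Q t := by
    intro t
    have : ∀ y : ℝ, f (W (y + ((t + (N:ℤ) : ℤ):ℝ) * c)) = f (W (y + t * c)) := by
      intro y
      have h : y + ((t + (N:ℤ) : ℤ):ℝ) * c = (y + t * c) + (d:ℝ)^l := by
        rw [← hcN]; push_cast; ring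
      rw [h, hWp, hper]
    simp only [Q, this]
  have hsum : ∑ t ∈ Finset.range (d^L), (f (W (y + t * ((d:ℝ)^s * D))) - f (W (z + t * ((d:ℝ)^s * D))))
      = M * ∑ t ∈ Finset.range N, Q t := by
    have hEr : ((d:ℝ)^s * D) = u * c := by
      have : (((d:ℤ)^s * D : ℤ):ℝ) = ((c * u : ℤ):ℝ) := by rw [← hE, hu]
      push_cast at this; rw [this]; ring
    rw [← sum_perm Q N hN0 hQ u hcop, hM, mul_comm N M, ← sum_range_mul_period (fun t => Q (t * u))]
    · apply Finset.sum_congr rfl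
      intro t _
      simp only [Q, hEr]
      push_cast
      simp only [mul_assoc]
    · intro t
      show Q ((t + N) * u) = _
      rw [add_mul, mul_comm (N:ℤ) u, per_mul Q N hQ]
  rw [hsum, abs_mul, Nat.abs_cast]
  have hb := tele_bound hK hf hper hW N (c:ℝ) (by exact_mod_cast hc0) (by intro x; rw [hcN]; exact hWp x) y z
  have hb2 : |∑ t ∈ Finset.range N, Q t| ≤ K := by simpa [Q] using hb
  have hdL : (d:ℝ)^L = N * M := by exact_mod_cast hM
  rw [hdL]
  have h2 : (1:ℝ) ≤ N * (1/2)^(l-s) := by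
    have : (2:ℝ)^(l-s) ≤ N := by exact_mod_cast hN2
    calc (1:ℝ) = 2^(l-s) * (1/2)^(l-s) := by rw [← mul_pow]; norm_num
      _ ≤ _ := by gcongr
  calc (M:ℝ) * |∑ t ∈ Finset.range N, Q t| ≤ M * K := by gcongr
    _ = M * (K * 1) := by ring
    _ ≤ M * (K * (N * (1/2)^(l-s))) := by gcongr
    _ = _ := by ring

structure Setup13 (d : ℕ) (τ f : ℝ → ℝ) (q K : ℝ) : Prop where
  hd : 2 ≤ d
  mono : Monotone τ
  zero : τ 0 = 0
  hadd : ∀ x, τ (x + d) = τ x + 1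
  q0 : 0 ≤ q
  q1 : q < 1
  contr : ∀ x y, |τ x - τ y| ≤ q * |x - y|
  K0 : 0 ≤ K
  lip : ∀ x y, |f x - f y| ≤ K * |x - y|
  per : Function.Periodic f 1

namespace Setup13

variable {d : ℕ} {τ f : ℝ → ℝ} {q K : ℝ}

lemma hadd_int (S : Setup13 d τ f q K) (x : ℝ) (m : ℤ) : τ (x + d * m) = τ x + m := by
  have key : ∀ m : ℤ, τ (x + d * (m + 1 : ℤ)) = τ (x + d * m) + 1 := by
    intro m
    rw [← S.hadd]; congr 1; push_cast; ring
  induction m using Int.induction_on with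
  | zero => simp
  | succ n ih => rw [key, ih]; push_cast; ring
  | pred n ih =>
    have := key (-(n:ℤ) - 1)
    rw [sub_add_cancel, ih] at this
    push_cast at this ⊢; linarith

lemma iter_add (S : Setup13 d τ f q K) (n : ℕ) (x : ℝ) (m : ℤ) :
    τ^[n] (x + (d:ℝ)^n * m) = τ^[n] x + m := by
  induction n generalizing x m with
  | zero => simp
  | succ n ih =>
    rw [Function.iterate_succ_apply', Function.iterate_succ_apply']
    have : x + (d:ℝ)^(n+1) * m = x + (d:ℝ)^n * ((d * m : ℤ) : ℝ) := by push_cast; ring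
    rw [this, ih]
    push_cast
    exact S.hadd_int _ _

lemma iter_mono (S : Setup13 d τ f q K) (n : ℕ) : Monotone (τ^[n]) := S.mono.iterate n

/-- digits partial sums -/
def dig (d : ℕ) (i : ℕ → ℕ) (n : ℕ) : ℤ := ∑ m ∈ Finset.range n, (i m : ℤ) * (d:ℤ)^m

lemma tauIt_eq (S : Setup13 d τ f q K) (i : ℕ → ℕ) (n : ℕ) (x : ℝ) :
    tauIt τ i n x = τ^[n] (x + dig d i n) := by
  induction n with
  | zero => simp [tauIt, dig]
  | succ n ih =>
    rw [Function.iterate_succ_apply']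
    show τ (tauIt τ i n x + i n) = _
    rw [ih]
    have : x + (dig d i (n+1) : ℝ) = (x + dig d i n) + (d:ℝ)^n * ((i n : ℤ) : ℝ) := by
      rw [dig, Finset.sum_range_succ, ← dig]; push_cast; ring
    rw [this, S.iter_add]
    simp

lemma iter_contr (S : Setup13 d τ f q K) (n : ℕ) (x y : ℝ) :
    |τ^[n] x - τ^[n] y| ≤ q^n * |x - y| := by
  induction n with
  | zero => simp
  | succ n ih =>
    rw [Function.iterate_succ_apply', Function.iterate_succ_apply']
    refine (S.contr _ _).trans ?_
    rw [pow_succ']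
    have := S.q0
    calc _ ≤ q * (q^n * |x-y|) := by gcongr
      _ = _ := by ring

/-- `V n = f ∘ τ^{n+1}` -/
def V (τ f : ℝ → ℝ) (n : ℕ) (x : ℝ) : ℝ := f (τ^[n+1] x)

lemma V_per (S : Setup13 d τ f q K) (n : ℕ) (x : ℝ) (m : ℤ) :
    V τ f n (x + (d:ℝ)^(n+1) * m) = V τ f n x := by
  unfold V
  rw [S.iter_add]
  have := S.per.int_mul m (τ^[n+1] x)
  simpa using this

lemma V_lip (S : Setup13 d τ f q K) (n : ℕ) (x y : ℝ) :
    |V τ f n x - V τ f n y| ≤ K * q^(n+1) * |x - y| := by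
  refine (S.lip _ _).trans ?_
  rw [mul_assoc]
  have := S.K0
  gcongr
  exact S.iter_contr _ _ _

lemma V_congr (S : Setup13 d τ f q K) (n : ℕ) (x : ℝ) (a b : ℤ) (h : (d:ℤ)^(n+1) ∣ a - b) :
    V τ f n (x + a) = V τ f n (x + b) := by
  obtain ⟨k, hk⟩ := h
  rw [← S.V_per n (x + b) k]
  have : (a:ℝ) - b = (d:ℝ)^(n+1) * k := by exact_mod_cast hk
  congr 1; linarith

lemma dig_dvd (i : ℕ → ℕ) (n L : ℕ) (h : n ≤ L) : (d:ℤ)^n ∣ dig d i L - dig d i n := by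
  unfold dig
  rw [← Finset.sum_range_add_sum_Ico _ h, add_sub_cancel_left]
  apply Finset.dvd_sum
  intro m hm
  exact Dvd.dvd.mul_left (pow_dvd_pow _ (Finset.mem_Ico.1 hm).1) _

lemma tauIt_V (S : Setup13 d τ f q K) (i : ℕ → ℕ) (n L : ℕ) (h : n < L) (x : ℝ) :
    f (tauIt τ i (n+1) x) = V τ f n (x + dig d i L) := by
  rw [S.tauIt_eq, S.V_congr n x (dig d i L) (dig d i (n+1)) (dig_dvd i _ _ h)]
  rfl

lemma term_bound (S : Setup13 d τ f q K) (i : ℕ → ℕ) (n : ℕ) (x y : ℝ) :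
    |f (tauIt τ i (n+1) x) - f (tauIt τ i (n+1) y)| ≤ K * |x - y| * q^(n+1) := by
  rw [S.tauIt_V i n (n+1) (Nat.lt_succ_self n), S.tauIt_V i n (n+1) (Nat.lt_succ_self n)]
  refine (S.V_lip _ _ _).trans (le_of_eq ?_)
  rw [add_sub_add_right_eq_sub]; ring

lemma term_hasSum (S : Setup13 d τ f q K) (i : ℕ → ℕ) (x y : ℝ) :
    Summable (fun n : ℕ => f (tauIt τ i (n+1) x) - f (tauIt τ i (n+1) y)) := by
  apply Summable.of_norm_bounded (g := fun n : ℕ => K * |x - y| * q^(n+1))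
  · apply Summable.mul_left
    exact (summable_nat_add_iff 1).2 (summable_geometric_of_lt_one S.q0 S.q1)
  · intro n; exact S.term_bound i n x y

lemma h_sub (S : Setup13 d τ f q K) (i : ℕ → ℕ) (x y : ℝ) :
    hFunR τ f i x - hFunR τ f i y = ∑' n : ℕ, (f (tauIt τ i (n+1) x) - f (tauIt τ i (n+1) y)) := by
  unfold hFunR
  rw [← (S.term_hasSum i x 0).tsum_sub (S.term_hasSum i y 0)]
  congr 1; ext n; ring

/-- error term -/
noncomputable def err (q K : ℝ) (L : ℕ) (x : ℝ) : ℝ := K * |x| * q * (1 - q)⁻¹ * q^L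

lemma err_tendsto (S : Setup13 d τ f q K) (x : ℝ) : Tendsto (fun L => err q K L x) atTop (𝓝 0) := by
  have := (tendsto_pow_atTop_nhds_zero_of_lt_one S.q0 S.q1).const_mul (K * |x| * q * (1 - q)⁻¹)
  simpa [err] using this

/-- Truncated sums. -/
def Phi (τ f : ℝ → ℝ) (L : ℕ) (x : ℝ) (m : ℤ) : ℝ :=
  ∑ n ∈ Finset.range L, (V τ f n (x + m) - V τ f n m)

lemma geo_tail (S : Setup13 d τ f q K) (a : ℕ → ℝ) (A : ℝ) (ha : ∀ n, |a n| ≤ A * q^(n+1)) (L : ℕ) :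
    |∑' n, a n - ∑ n ∈ Finset.range L, a n| ≤ A * q * (1 - q)⁻¹ * q^L := by
  have hs : Summable a := by
    apply Summable.of_norm_bounded (g := fun n : ℕ => A * q^(n+1))
    · apply Summable.mul_left
      exact (summable_nat_add_iff 1).2 (summable_geometric_of_lt_one S.q0 S.q1)
    · exact ha
  rw [← hs.sum_add_tsum_nat_add L, add_sub_cancel_left]
  have hg := ((hasSum_geometric_of_lt_one S.q0 S.q1).mul_left (A * q * q^L))
  have := tsum_of_norm_bounded (f := fun n => a (n + L)) hg (by
    intro n
    refine (ha (n+L)).trans (le_of_eq ?_)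
    ring)
  rw [Real.norm_eq_abs] at this
  refine this.trans (le_of_eq ?_)
  ring

lemma trunc (S : Setup13 d τ f q K) (i : ℕ → ℕ) (L : ℕ) (x : ℝ) (m : ℤ) :
    |hFunR τ f i (x + m) - hFunR τ f i m - Phi τ f L x (m + dig d i L)| ≤ err q K L x := by
  rw [S.h_sub]
  have h1 : Phi τ f L x (m + dig d i L) =
      ∑ n ∈ Finset.range L, (f (tauIt τ i (n+1) (x + m)) - f (tauIt τ i (n+1) m)) := by
    unfold Phi
    apply Finset.sum_congr rfl
    intro n hn
    rw [S.tauIt_V i n L (Finset.mem_range.1 hn), S.tauIt_V i n L (Finset.mem_range.1 hn)]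
    push_cast; rw [add_assoc]
  rw [h1]
  refine S.geo_tail _ (K * |x|) ?_ L
  intro n
  have := S.term_bound i n (x + m) m
  rwa [add_sub_cancel_right] at this

lemma Phi_tail (S : Setup13 d τ f q K) (L L' : ℕ) (h : L ≤ L') (x : ℝ) (m : ℤ) :
    |Phi τ f L' x m - Phi τ f L x m| ≤ err q K L x := by
  let a : ℕ → ℝ := fun n => if n < L' then V τ f n (x + m) - V τ f n m else 0
  have hsum : ∑' n, a n = Phi τ f L' x m := by
    rw [tsum_eq_sum (s := Finset.range L')]
    · unfold Phi
      apply Finset.sum_congr rfl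
      intro n hn
      simp [a, Finset.mem_range.1 hn]
    · intro n hn
      simp only [Finset.mem_range] at hn
      simp [a, hn]
  have h2 : ∑ n ∈ Finset.range L, a n = Phi τ f L x m := by
    unfold Phi
    apply Finset.sum_congr rfl
    intro n hn
    have : n < L' := lt_of_lt_of_le (Finset.mem_range.1 hn) h
    simp [a, this]
  rw [← hsum, ← h2]
  refine S.geo_tail a (K * |x|) ?_ L
  intro n
  have hK := S.K0
  have hq := S.q0
  by_cases hn : n < L'
  · simp only [a, hn, if_true]
    refine (S.V_lip _ _ _).trans (le_of_eq ?_)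
    rw [add_sub_cancel_right]; ring
  · simp only [a, hn, if_false, abs_zero]
    positivity

lemma Phi_congr (S : Setup13 d τ f q K) (L : ℕ) (x : ℝ) (a b : ℤ) (h : (d:ℤ)^L ∣ a - b) :
    Phi τ f L x a = Phi τ f L x b := by
  unfold Phi
  apply Finset.sum_congr rfl
  intro n hn
  have h' : (d:ℤ)^(n+1) ∣ a - b := (pow_dvd_pow _ (Finset.mem_range.1 hn)).trans h
  rw [S.V_congr n x a b h']
  have := S.V_congr n 0 a b h'
  rw [zero_add, zero_add] at this
  rw [this]

/-- approximate invariance, exact in the limit -/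
lemma Phi_inv (S : Setup13 d τ f q K) (i j : ℕ → ℕ) (hij : hFunR τ f i = hFunR τ f j)
    (L : ℕ) (x : ℝ) (m : ℤ) (t : ℕ) :
    |Phi τ f L x (m + t * (dig d j L - dig d i L)) - Phi τ f L x m| ≤ 2 * err q K L x := by
  have step : ∀ (L' : ℕ) (m : ℤ),
      |Phi τ f L' x (m + (dig d j L' - dig d i L')) - Phi τ f L' x m| ≤ 2 * err q K L' x := by
    intro L' m
    have h1 := S.trunc i L' x (m - dig d i L')
    have h2 := S.trunc j L' x (m - dig d i L')
    rw [← hij] at h2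
    rw [sub_add_cancel] at h1
    have e : m - dig d i L' + dig d j L' = m + (dig d j L' - dig d i L') := by ring
    rw [e] at h2
    rw [abs_le] at h1 h2 ⊢
    constructor <;> linarith [h1.1, h1.2, h2.1, h2.2]
  have steps : ∀ (L' : ℕ) (t : ℕ),
      |Phi τ f L' x (m + t * (dig d j L' - dig d i L')) - Phi τ f L' x m| ≤ t * (2 * err q K L' x) := by
    intro L' t
    induction t with
    | zero => simp
    | succ t ih =>
      have h1 := step L' (m + t * (dig d j L' - dig d i L'))
      have e : m + t * (dig d j L' - dig d i L') + (dig d j L' - dig d i L')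
        = m + (t + 1 : ℕ) * (dig d j L' - dig d i L') := by push_cast; ring
      rw [e] at h1
      rw [abs_le] at h1 ih ⊢
      push_cast
      push_cast at h1
      constructor <;> linarith [h1.1, h1.2, ih.1, ih.2]
  have hlim : Tendsto (fun L' => t * (2 * err q K L' x) + 2 * err q K L x) atTop
      (𝓝 (2 * err q K L x)) := by
    have := (((S.err_tendsto x).const_mul 2).const_mul (t:ℝ)).add_const (2 * err q K L x)
    simpa using this
  refine ge_of_tendsto hlim ?_
  filter_upwards [eventually_ge_atTop L] with L' hL'
  have h1 := steps L' t
  have h2 := S.Phi_tail L L' hL' x (m + t * (dig d j L' - dig d i L'))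
  have h3 := S.Phi_tail L L' hL' x m
  have h4 : Phi τ f L x (m + t * (dig d j L' - dig d i L'))
      = Phi τ f L x (m + t * (dig d j L - dig d i L)) := by
    apply S.Phi_congr
    have := (dig_dvd (d := d) j L L' hL').sub (dig_dvd (d := d) i L L' hL')
    have e : m + t * (dig d j L' - dig d i L') - (m + t * (dig d j L - dig d i L))
      = t * (dig d j L' - dig d j L - (dig d i L' - dig d i L)) := by ring
    rw [e]
    exact this.mul_left _
  rw [h4] at h2
  rw [abs_le] at h1 h2 h3 ⊢
  constructor <;> linarith [h1.1, h1.2, h2.1, h2.2, h3.1, h3.2]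

lemma dig_factor {d : ℕ} (i j : ℕ → Fin d) (hij : i ≠ j) :
    ∃ s : ℕ, ∀ L, s < L → ∃ D : ℤ, ¬ (d:ℤ) ∣ D ∧
      dig d (fun m => (j m : ℕ)) L - dig d (fun m => (i m : ℕ)) L = (d:ℤ)^s * D := by
  classical
  have hex : ∃ m, i m ≠ j m := Function.ne_iff.1 hij
  refine ⟨Nat.find hex, fun L hL => ?_⟩
  set s := Nat.find hex
  have hs : i s ≠ j s := Nat.find_spec hex
  have hmin : ∀ m < s, i m = j m := fun m hm => not_not.1 (Nat.find_min hex hm)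
  have hdj := dig_dvd (d := d) (fun m => (j m : ℕ)) (s+1) L hL
  have hdi := dig_dvd (d := d) (fun m => (i m : ℕ)) (s+1) L hL
  obtain ⟨a, ha⟩ := hdj.sub hdi
  have heq : dig d (fun m => (j m : ℕ)) s = dig d (fun m => (i m : ℕ)) s := by
    unfold dig
    apply Finset.sum_congr rfl
    intro m hm
    simp only [hmin m (Finset.mem_range.1 hm)]
  refine ⟨((j s : ℕ) : ℤ) - ((i s : ℕ) : ℤ) + d * a, ?_, ?_⟩
  · intro h
    have h' : (d:ℤ) ∣ ((j s : ℕ) : ℤ) - ((i s : ℕ) : ℤ) := by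
      have := h.sub (Dvd.intro a rfl : (d:ℤ) ∣ d * a)
      rwa [add_sub_cancel_right] at this
    have h0 := Int.eq_zero_of_abs_lt_dvd h' (by
      have h1 := (i s).isLt
      have h2 := (j s).isLt
      rw [abs_lt]; constructor <;> omega)
    apply hs
    apply Fin.ext
    omega
  · have e1 : dig d (fun m => (j m : ℕ)) (s+1) = dig d (fun m => (j m : ℕ)) s + (j s : ℕ) * (d:ℤ)^s := by
      unfold dig; rw [Finset.sum_range_succ]
    have e2 : dig d (fun m => (i m : ℕ)) (s+1) = dig d (fun m => (i m : ℕ)) s + (i s : ℕ) * (d:ℤ)^s := by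
      unfold dig; rw [Finset.sum_range_succ]
    rw [e1, e2, heq] at ha
    rw [pow_succ] at ha
    linear_combination ha

/-- key uniform estimate -/
lemma key (S : Setup13 d τ f q K) (i j : ℕ → Fin d) (hne : i ≠ j)
    (hij : hFunR τ f (fun m => (i m : ℕ)) = hFunR τ f (fun m => (j m : ℕ))) :
    ∃ s : ℕ, ∀ n, s ≤ n → ∀ (x : ℝ) (b : ℤ), (d:ℤ)^n ∣ b →
      |hFunR τ f (fun _ => 0) (x + b) - hFunR τ f (fun _ => 0) b - hFunR τ f (fun _ => 0) x|
        ≤ 4 * K * (1/2)^(n-s) := by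
  obtain ⟨s, hs⟩ := dig_factor i j hne
  refine ⟨s, fun n hn x b hb => ?_⟩
  set H := hFunR τ f (fun _ => 0) with hH
  have hH0 : H 0 = 0 := by simp [hH, hFunR]
  have hdig : ∀ L, dig d (fun _ => 0) L = 0 := by intro L; simp [dig]
  have hlim : Tendsto (fun L => 6 * err q K L x + 4 * K * (1/2)^(n-s)) atTop
      (𝓝 (4 * K * (1/2)^(n-s))) := by
    have := ((S.err_tendsto x).const_mul 6).add_const (4 * K * (1/2)^(n-s))
    simpa using this
  refine ge_of_tendsto hlim ?_
  filter_upwards [eventually_gt_atTop n] with L hL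
  obtain ⟨D, hD, hfac⟩ := hs L (lt_of_le_of_lt hn hL)
  have t1 := S.trunc (fun _ => 0) L x b
  have t2 := S.trunc (fun _ => 0) L x 0
  rw [hdig, add_zero] at t1 t2
  rw [← hH] at t1 t2
  rw [Int.cast_zero, add_zero, hH0, sub_zero] at t2
  have hd0 : (0:ℝ) < d := by have := S.hd; positivity
  -- averaging
  have avg : ∀ m : ℤ, |∑ t ∈ Finset.range (d^L), Phi τ f L x (m + t * ((d:ℤ)^s * D)) - d^L * Phi τ f L x m|
      ≤ d^L * (2 * err q K L x) := by
    intro m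
    have e : (d:ℝ)^L * Phi τ f L x m = ∑ t ∈ Finset.range (d^L), Phi τ f L x m := by simp
    rw [e, ← Finset.sum_sub_distrib]
    refine (Finset.abs_sum_le_sum_abs _ _).trans ?_
    refine (Finset.sum_le_sum (g := fun _ => 2 * err q K L x) fun t _ => ?_).trans (by simp)
    rw [← hfac]
    exact S.Phi_inv _ _ hij L x m t
  have mid : |∑ t ∈ Finset.range (d^L), Phi τ f L x (b + t * ((d:ℤ)^s * D))
      - ∑ t ∈ Finset.range (d^L), Phi τ f L x (0 + t * ((d:ℤ)^s * D))| ≤ d^L * (4 * K * (1/2)^(n-s)) := by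
    simp only [Phi]
    rw [Finset.sum_comm, Finset.sum_comm (s := Finset.range (d^L)), ← Finset.sum_sub_distrib]
    refine (Finset.abs_sum_le_sum_abs _ _).trans ?_
    have hterm : ∀ l ∈ Finset.range L,
        |∑ t ∈ Finset.range (d^L), (V τ f l (x + ((b + t * ((d:ℤ)^s * D) : ℤ) : ℝ)) - V τ f l ((b + t * ((d:ℤ)^s * D) : ℤ) : ℝ))
        - ∑ t ∈ Finset.range (d^L), (V τ f l (x + ((0 + t * ((d:ℤ)^s * D) : ℤ) : ℝ)) - V τ f l ((0 + t * ((d:ℤ)^s * D) : ℤ) : ℝ))|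
        ≤ if l < n then 0 else d^L * (2 * K * (1/2)^(l+1-s)) := by
      intro l hl
      have hl' := Finset.mem_range.1 hl
      split_ifs with hln
      · apply le_of_eq
        rw [abs_eq_zero, sub_eq_zero]
        apply Finset.sum_congr rfl
        intro t _
        have hdv : (d:ℤ)^(l+1) ∣ (b + t * ((d:ℤ)^s * D)) - (0 + t * ((d:ℤ)^s * D)) := by
          rw [add_sub_add_right_eq_sub, sub_zero]
          exact (pow_dvd_pow _ hln).trans hb
        rw [S.V_congr l x _ _ hdv]
        have := S.V_congr l 0 _ _ hdv
        rw [zero_add, zero_add] at this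
        rw [this]
      · have A : ∀ y z : ℝ, |∑ t ∈ Finset.range (d^L), (V τ f l (y + t * ((d:ℝ)^s * D)) - V τ f l (z + t * ((d:ℝ)^s * D)))|
            ≤ d^L * (K * (1/2)^(l+1-s)) := by
          intro y z
          exact avg_bound S.K0 S.lip S.per (S.iter_mono (l+1)) d S.hd (l+1) L s hl' (by omega)
            (by intro x; have := S.iter_add (l+1) x 1; simpa using this) D hD y z
        have A1 := A (x + b) b
        have A2 := A x 0
        push_cast
        simp only [← add_assoc, zero_add] at A1 A2 ⊢
        refine (abs_sub _ _).trans ?_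
        linarith
    refine (Finset.sum_le_sum hterm).trans ?_
    have hgeo : ∑ l ∈ Finset.range L, (if l < n then (0:ℝ) else d^L * (2 * K * (1/2)^(l+1-s)))
        = d^L * (2 * K) * (1/2)^(n-s) * ∑ k ∈ Finset.range (L - n), (1/2:ℝ)^(k+1) := by
      rw [← Finset.sum_range_add_sum_Ico _ hL.le, Finset.sum_Ico_eq_sum_range]
      rw [Finset.sum_eq_zero (fun l hl => by simp [Finset.mem_range.1 hl]), zero_add, Finset.mul_sum]
      apply Finset.sum_congr rfl
      intro k _
      have : ¬ (n + k < n) := by omega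
      simp only [this, if_false]
      have e : n + k + 1 - s = (n - s) + (k + 1) := by omega
      rw [e, pow_add (1/2:ℝ) (n-s) (k+1)]; ring
    rw [hgeo]
    have hle : ∑ k ∈ Finset.range (L - n), (1/2:ℝ)^(k+1) ≤ 2 := by
      have h1 := Summable.sum_le_tsum (f := fun k : ℕ => (1/2:ℝ)^k) (Finset.range (L-n)) (fun _ _ => by positivity)
        summable_geometric_two
      rw [tsum_geometric_two] at h1
      refine le_trans (Finset.sum_le_sum fun k _ => ?_) h1
      exact pow_le_pow_of_le_one (by norm_num) (by norm_num) (Nat.le_succ k)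
    have hK := S.K0
    calc _ ≤ d^L * (2 * K) * (1/2)^(n-s) * 2 := by gcongr
      _ = _ := by ring
  have a1 := avg b
  have a2 := avg 0
  have hp : |(d:ℝ)^L * (Phi τ f L x b - Phi τ f L x 0)| ≤ d^L * (4 * err q K L x + 4 * K * (1/2)^(n-s)) := by
    rw [abs_le] at a1 a2 mid ⊢
    constructor <;> linarith [a1.1, a1.2, a2.1, a2.2, mid.1, mid.2]
  rw [abs_mul, abs_of_pos (by positivity : (0:ℝ) < d^L)] at hp
  have hp' := le_of_mul_le_mul_left hp (by positivity)
  rw [abs_le] at hp' t1 t2 ⊢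
  constructor <;> linarith [hp'.1, hp'.2, t1.1, t1.2, t2.1, t2.2]

end Setup13

lemma exists_setup13 (d : ℕ) (hd : 2 ≤ d)
    (That : ℝ → ℝ) (hTan : ∀ x, AnalyticAt ℝ That x) (hT0 : That 0 = 0)
    (hTdeg : ∀ x, That (x + 1) = That x + d)
    (hTexp : ∀ x, 1 < deriv That x)
    (tau : ℝ → ℝ) (htau1 : ∀ x, That (tau x) = x) (htau2 : ∀ x, tau (That x) = x)
    (fhat : ℝ → ℝ) (hfan : ∀ x, AnalyticAt ℝ fhat x)
    (hfper : Function.Periodic fhat 1) : ∃ q K, Setup13 d tau fhat q K := by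
  have hTd : Differentiable ℝ That := fun x => (hTan x).differentiableAt
  have hfd : Differentiable ℝ fhat := fun x => (hfan x).differentiableAt
  have hTc : Continuous (deriv That) :=
    continuous_iff_continuousAt.2 fun x => (hTan x).deriv.continuousAt
  have hfc : Continuous (deriv fhat) :=
    continuous_iff_continuousAt.2 fun x => (hfan x).deriv.continuousAt
  have hTp : Function.Periodic (deriv That) 1 := by
    intro x
    rw [← deriv_comp_add_const]
    have : (fun x => That (x + 1)) = fun x => That x + d := funext hTdeg
    rw [this, deriv_add_const]
  have hfp : Function.Periodic (deriv fhat) 1 := by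
    intro x
    rw [← deriv_comp_add_const]
    have : (fun x => fhat (x + 1)) = fhat := funext hfper
    rw [this]
  obtain ⟨κ, hκ1, hκ⟩ : ∃ κ, 1 < κ ∧ ∀ x, κ ≤ deriv That x := by
    have hcomp := hTp.compact_of_continuous one_ne_zero hTc
    obtain ⟨m, hm⟩ := hcomp.exists_isLeast (Set.range_nonempty _)
    obtain ⟨x0, hx0⟩ := hm.1
    exact ⟨m, by rw [← hx0]; exact hTexp x0, fun x => hm.2 ⟨x, rfl⟩⟩
  obtain ⟨K, hK⟩ : ∃ K, ∀ x, |deriv fhat x| ≤ K := by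
    have hb := hfp.isBounded_of_continuous one_ne_zero hfc
    obtain ⟨K, hK⟩ := hb.exists_norm_le
    exact ⟨K, fun x => hK _ ⟨x, rfl⟩⟩
  have hexp : ∀ x y, x ≤ y → κ * (y - x) ≤ That y - That x := fun x y hxy =>
    mul_sub_le_image_sub_of_le_deriv hTd hκ hxy
  have hκ0 : 0 < κ := by linarith
  have hTmono : StrictMono That := by
    intro x y hxy
    have := hexp x y hxy.le
    nlinarith
  have hmono : Monotone tau := by
    intro x y hxy
    rw [← hTmono.le_iff_le, htau1, htau1]; exact hxy
  refine ⟨κ⁻¹, K, hd, hmono, ?_, ?_, by positivity, inv_lt_one_of_one_lt₀ hκ1, ?_,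
    (abs_nonneg _).trans (hK 0), ?_, hfper⟩
  · have := htau2 0
    rwa [hT0] at this
  · intro x
    have := htau2 (tau x + 1)
    rwa [hTdeg, htau1] at this
  · have : ∀ x y, x ≤ y → |tau x - tau y| ≤ κ⁻¹ * |x - y| := by
      intro x y hxy
      have h1 := hmono hxy
      have h2 := hexp _ _ h1
      rw [htau1, htau1] at h2
      rw [abs_sub_comm, abs_of_nonneg (by linarith), abs_sub_comm, abs_of_nonneg (by linarith)]
      rw [inv_mul_eq_div, le_div_iff₀ hκ0]; linarith
    intro x y
    rcases le_total x y with h | h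
    · exact this x y h
    · rw [abs_sub_comm, abs_sub_comm x]; exact this y x h
  · intro x y
    have := Convex.norm_image_sub_le_of_norm_deriv_le (f := fhat) (s := Set.univ) (C := K)
      (fun x _ => hfd x) (fun x _ => hK x) convex_univ (Set.mem_univ y) (Set.mem_univ x)
    simpa using this

lemma tau_analytic13
    (That : ℝ → ℝ) (hTan : ∀ x, AnalyticAt ℝ That x)
    (hTexp : ∀ x, 1 < deriv That x)
    (tau : ℝ → ℝ) (htau1 : ∀ x, That (tau x) = x) (htau2 : ∀ x, tau (That x) = x)
    (hc : Continuous tau) (x : ℝ) : AnalyticAt ℝ tau x := by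
  let e : ℝ ≃ₜ ℝ :=
    { toFun := That
      invFun := tau
      left_inv := htau2
      right_inv := htau1
      continuous_toFun := continuous_iff_continuousAt.2 fun x => (hTan x).continuousAt
      continuous_invFun := hc }
  have h : ContDiffAt ℝ ⊤ e.toOpenPartialHomeomorph.symm x := by
    apply OpenPartialHomeomorph.contDiffAt_symm_deriv (f₀' := deriv That (tau x))
    · exact (lt_trans zero_lt_one (hTexp _)).ne'
    · simp
    · exact (hTan (tau x)).differentiableAt.hasDerivAt
    · exact (hTan (tau x)).contDiffAt
  exact h.analyticAt

/-- **Transversality.** Let `T` be a real analytic orientation-preserving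
expanding circle map of degree `d` with `T(0)=0` (lift `T̂`, `τ = T̂⁻¹`) and let `f` be a
real analytic real-valued function on the circle with 1-periodic lift `f̂`. Then either
`f` is real analytically cohomologous to a constant (`f = g∘T − g + c`, `g` real
analytic) and `h_i ≡ h_j` for all `i, j ∈ Σ_d`, or `h_i ≢ h_j` whenever `i ≠ j`. -/
theorem stmt_13 (d : ℕ) (hd : 2 ≤ d)
    (That : ℝ → ℝ) (hTan : ∀ x, AnalyticAt ℝ That x) (hT0 : That 0 = 0)
    (hTdeg : ∀ x, That (x + 1) = That x + d)
    (hTexp : ∀ x, 1 < deriv That x)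
    (tau : ℝ → ℝ) (htau1 : ∀ x, That (tau x) = x) (htau2 : ∀ x, tau (That x) = x)
    (fhat : ℝ → ℝ) (hfan : ∀ x, AnalyticAt ℝ fhat x)
    (hfper : Function.Periodic fhat 1) :
    ((∃ g : ℝ → ℝ, (∀ x, AnalyticAt ℝ g x) ∧ Function.Periodic g 1 ∧
        ∃ c : ℝ, ∀ x, fhat x = g (That x) - g x + c) ∧
      ∀ i j : ℕ → Fin d,
        hFunR tau fhat (fun m => (i m : ℕ)) = hFunR tau fhat (fun m => (j m : ℕ))) ∨
    (∀ i j : ℕ → Fin d, i ≠ j →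
        hFunR tau fhat (fun m => (i m : ℕ)) ≠ hFunR tau fhat (fun m => (j m : ℕ))) := by
  classical
  obtain ⟨q, K, S⟩ := exists_setup13 d hd That hTan hT0 hTdeg hTexp tau htau1 htau2 fhat hfan hfper
  by_cases hall : ∀ i j : ℕ → Fin d, i ≠ j →
        hFunR tau fhat (fun m => (i m : ℕ)) ≠ hFunR tau fhat (fun m => (j m : ℕ))
  · exact Or.inr hall
  left
  push Not at hall
  obtain ⟨i, j, hne, hij⟩ := hall
  obtain ⟨s, hs⟩ := S.key i j hne hij
  set h : ℝ → ℝ := hFunR tau fhat (fun _ => 0) with hh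
  have hit : ∀ n x, tauIt tau (fun _ => 0) n x = tau^[n] x := by
    intro n x
    rw [S.tauIt_eq]; simp [Setup13.dig]
  have hit0 : ∀ n, tau^[n] 0 = 0 := fun n => Function.iterate_fixed S.zero n
  have hform : ∀ x, h x = ∑' n : ℕ, (fhat (tau^[n+1] x) - fhat 0) := by
    intro x
    simp only [hh, hFunR, hit, hit0]
  have hsummable : ∀ x, Summable (fun n : ℕ => fhat (tau^[n+1] x) - fhat 0) := by
    intro x
    have := S.term_hasSum (fun _ => 0) x 0
    simpa only [hit, hit0] using this
  have h0 : h 0 = 0 := by simp [hh, hFunR]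
  -- functional equation
  have hfe : ∀ x, h x = (fhat (tau x) - fhat 0) + h (tau x) := by
    intro x
    rw [hform, (hsummable x).tsum_eq_zero_add, hform]
    rfl
  have hfeT : ∀ x, h (That x) = fhat x - fhat 0 + h x := by
    intro x
    rw [hfe (That x), htau2]
  -- invariance of the cocycle
  have hTint : ∀ (n : ℕ) x, That (x + n) = That x + d * n := by
    intro n x
    induction n with
    | zero => simp
    | succ n ih =>
      have : x + ((n+1 : ℕ):ℝ) = (x + n) + 1 := by push_cast; ring
      rw [this, hTdeg, ih]; push_cast; ring
  have hfnat : ∀ (n : ℕ) x, fhat (x + n) = fhat x := by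
    intro n x
    have := hfper.nat_mul n x
    simpa using this
  have hw : ∀ (m : ℕ) x, h (That x + d * m) - h (d * m) - h (That x) = h (x + m) - h m - h x := by
    intro m x
    have e1 := hfeT (x + m)
    have e2 := hfeT x
    have e3 := hfeT m
    have e4 := hTint m 0
    rw [zero_add, hT0, zero_add] at e4
    have e5 := hfnat m 0
    rw [zero_add] at e5
    rw [hTint, hfnat] at e1
    rw [e4, e5] at e3
    rw [e1, e2, e3]; ring
  have hwn : ∀ (n : ℕ) x, h (That^[n] x + (d:ℝ)^n) - h ((d:ℝ)^n) - h (That^[n] x) = h (x + 1) - h 1 - h x := by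
    intro n x
    induction n with
    | zero => simp
    | succ n ih =>
      rw [Function.iterate_succ_apply', ← ih]
      have := hw (d^n) (That^[n] x)
      push_cast at this
      rw [pow_succ', this]
  have hadd1 : ∀ x, h (x + 1) - h 1 - h x = 0 := by
    intro x
    have hlim : Tendsto (fun n : ℕ => 4 * K * (1/2:ℝ)^(n-s)) atTop (𝓝 0) := by
      have h1 := (tendsto_pow_atTop_nhds_zero_of_lt_one (r := (1/2:ℝ)) (by norm_num) (by norm_num)).comp
        (tendsto_sub_atTop_nat s)
      have := h1.const_mul (4*K)
      simpa using this
    have : |h (x + 1) - h 1 - h x| ≤ 0 := by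
      refine ge_of_tendsto hlim ?_
      filter_upwards [eventually_ge_atTop s] with n hn
      rw [← hwn n x]
      have := hs n hn (That^[n] x) ((d:ℤ)^n) (dvd_refl _)
      push_cast at this
      exact this
    exact abs_nonpos_iff.1 this
  have hnat : ∀ n : ℕ, h n = n * h 1 := by
    intro n
    induction n with
    | zero => simp [h0]
    | succ n ih =>
      have := hadd1 n
      push_cast; rw [ih] at this; linarith
  have h1 : h 1 = 0 := by
    have e1 := hfeT 1
    have e2 := hTdeg 0
    have e3 := hfper 0
    rw [zero_add] at e2 e3
    rw [hT0, zero_add] at e2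
    rw [e2, e3, hnat] at e1
    have hd' : (2:ℝ) ≤ d := by exact_mod_cast hd
    have : ((d:ℝ) - 1) * h 1 = 0 := by linarith
    rcases mul_eq_zero.1 this with h | h
    · linarith
    · exact h
  have hper : Function.Periodic h 1 := by
    intro x
    have := hadd1 x
    rw [h1] at this; linarith
  -- analyticity
  have htc : Continuous tau := by
    refine (LipschitzWith.of_dist_le_mul (K := ⟨q, S.q0⟩) fun x y => ?_).continuous
    exact S.contr x y
  have hta := tau_analytic13 That hTan hTexp tau htau1 htau2 htc
  have hA0 : AnalyticAt ℝ h 0 := by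
    have := local_analytic (hfan 0) (hta 0) S.zero S.q0 S.q1 (fun x => by
      have := S.contr x 0
      simpa [S.zero] using this)
    have e : h = fun x => ∑' n : ℕ, (fhat (tau^[n+1] x) - fhat 0) := funext hform
    rw [e]; exact this
  have hback : ∀ x, AnalyticAt ℝ h (tau x) → AnalyticAt ℝ h x := by
    intro x hx
    have e : h = fun x => (fhat (tau x) - fhat 0) + h (tau x) := funext hfe
    rw [e]
    exact (((hfan _).comp (hta x)).sub analyticAt_const).add (AnalyticAt.comp hx (hta x))
  have hbackn : ∀ (n : ℕ) x, AnalyticAt ℝ h (tau^[n] x) → AnalyticAt ℝ h x := by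
    intro n
    induction n with
    | zero => intro x hx; exact hx
    | succ n ih =>
      intro x hx
      rw [Function.iterate_succ_apply'] at hx
      exact ih x (hback _ hx)
  have hAn : ∀ x, AnalyticAt ℝ h x := by
    intro x
    have ht : Tendsto (fun n => tau^[n] x) atTop (𝓝 0) := by
      rw [tendsto_zero_iff_abs_tendsto_zero]
      have hl := (tendsto_pow_atTop_nhds_zero_of_lt_one S.q0 S.q1).mul_const |x|
      rw [zero_mul] at hl
      refine squeeze_zero (fun n => abs_nonneg _) (fun n => ?_) hl
      have := S.iter_contr n x 0
      rwa [hit0, sub_zero, sub_zero] at this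
    obtain ⟨n, hn⟩ := (ht.eventually hA0.eventually_analyticAt).exists
    exact hbackn n x hn
  refine ⟨⟨h, hAn, hper, fhat 0, fun x => by rw [hfeT]; ring⟩, ?_⟩
  -- all `h_i` are equal to `h`
  have hcont : Continuous h := continuous_iff_continuousAt.2 fun x => (hAn x).continuousAt
  have hperN : ∀ (n : ℕ) x, h (x + n) = h x := by
    intro n x
    have := hper.nat_mul n x
    simpa using this
  have heq : ∀ i : ℕ → ℕ, hFunR tau fhat i = h := by
    intro i
    ext x
    have hstep : ∀ y (n : ℕ), fhat (tauIt tau i (n+1) y) = h (tauIt tau i n y) - h (tauIt tau i (n+1) y) + fhat 0 := by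
      intro y n
      have e1 := hfeT (tauIt tau i (n+1) y)
      have e2 : That (tauIt tau i (n+1) y) = tauIt tau i n y + i n := htau1 _
      rw [e2, hperN] at e1
      linarith
    have hpart : ∀ L : ℕ, ∑ n ∈ Finset.range L, (fhat (tauIt tau i (n+1) x) - fhat (tauIt tau i (n+1) 0))
        = h x - (h (tauIt tau i L x) - h (tauIt tau i L 0)) := by
      intro L
      induction L with
      | zero => simp [tauIt, h0]
      | succ L ih => rw [Finset.sum_range_succ, ih, hstep x, hstep 0]; ring
    have hT1 := (S.term_hasSum i x 0).hasSum.tendsto_sum_nat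
    simp only [hpart] at hT1
    have hlip : ∀ y z, |h y - h z| ≤ K * |y - z| * q * (1 - q)⁻¹ := by
      intro y z
      have := S.geo_tail (fun n => fhat (tauIt tau (fun _ => 0) (n+1) y) - fhat (tauIt tau (fun _ => 0) (n+1) z))
        (K * |y - z|) (fun n => S.term_bound _ n y z) 0
      rw [← S.h_sub] at this
      simpa using this
    have hT2 : Tendsto (fun L => h (tauIt tau i L x) - h (tauIt tau i L 0)) atTop (𝓝 0) := by
      rw [tendsto_zero_iff_abs_tendsto_zero]
      have hl := ((((tendsto_pow_atTop_nhds_zero_of_lt_one S.q0 S.q1).mul_const |x|).const_mul K).mul_const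
        q).mul_const (1 - q)⁻¹
      simp only [zero_mul, mul_zero] at hl
      refine squeeze_zero (fun n => abs_nonneg _) (fun n => ?_) hl
      refine (hlip _ _).trans ?_
      have h1 : |tauIt tau i n x - tauIt tau i n 0| ≤ q^n * |x| := by
        rw [S.tauIt_eq, S.tauIt_eq]
        refine (S.iter_contr n _ _).trans (le_of_eq ?_)
        rw [add_sub_add_right_eq_sub, sub_zero]
      have := S.K0
      have := S.q0
      have : 0 ≤ (1 - q)⁻¹ := inv_nonneg.2 (by linarith [S.q1])
      gcongr
    have hT3 := hT2.const_sub (h x)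
    rw [sub_zero] at hT3
    exact tendsto_nhds_unique hT1 hT3
  intro i j
  rw [heq, heq]
end

section
/- Let T : ℝ/ℤ → ℝ/ℤ be a C^r expanding map, r ∈ {1,2,...,∞,ω}, of degree D = deg(T). If log|T'| is C⁰-cohomologous to a constant (i.e. there is continuous u with log|T'| = u∘T − u + c), then T is C^r-conjugate to the linear map x ↦ D·x mod 1; specifically there is a C^r diffeomorphism φ of ℝ/ℤ with φ∘T∘φ^{-1}(x) = D·x and c = log D. -/
open Filter Topology Set

lemma aux_e (l m : ℝ) (hl : |l| < 1) (hm : |m| ≤ 1) (e : ℝ → ℝ) (he : Continuous e) (k : ℝ)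
    (h : ∀ t, e t = m * e (l * t) + k) (t : ℝ) : e t = e 0 := by
  have h0 : e 0 = m * e 0 + k := by simpa using h 0
  have h1 : ∀ n : ℕ, e t - e 0 = m ^ n * (e (l ^ n * t) - e 0) := by
    intro n
    induction n with
    | zero => simp
    | succ n ih =>
      rw [ih, h (l ^ n * t), show l ^ (n+1) * t = l * (l ^ n * t) by ring, pow_succ]
      linear_combination (-m^n) * h0
  have h2 : Tendsto (fun n : ℕ => |e (l ^ n * t) - e 0|) atTop (𝓝 0) := by
    have h3 : Tendsto (fun n : ℕ => l ^ n * t) atTop (𝓝 0) := by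
      simpa using (tendsto_pow_atTop_nhds_zero_of_abs_lt_one hl).mul_const t
    have := (((he.tendsto 0).comp h3).sub_const (e 0)).abs
    simpa using this
  have h4 : |e t - e 0| ≤ 0 := by
    refine ge_of_tendsto' h2 fun n => ?_
    rw [h1 n, abs_mul, abs_pow]
    exact mul_le_of_le_one_left (abs_nonneg _) (pow_le_one₀ (abs_nonneg _) hm)
  have := abs_nonpos_iff.1 h4
  linarith

lemma aux_deriv (l m : ℝ) (hl : |l| < 1) (hm : |m| ≤ 1) (G v : ℝ → ℝ) (hG : ContDiff ℝ 1 G)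
    (hv : Continuous v) (h : ∀ t, v t = m * v (l * t) + G t) :
    ∃ w : ℝ → ℝ, Continuous w ∧ (∀ t, HasDerivAt v (w t) t) ∧
      ∀ t, w t = (m * l) * w (l * t) + deriv G t := by
  have hG' : Continuous (deriv G) := hG.continuous_deriv le_rfl
  have hml : |m * l| < 1 := by
    rw [abs_mul]
    exact (mul_le_of_le_one_left (abs_nonneg _) hm).trans_lt hl
  set f : ℕ → ℝ → ℝ := fun n t => (m * l) ^ n * deriv G (l ^ n * t) with hf
  have hfc : ∀ n, Continuous (f n) := fun n => by fun_prop
  have hbound : ∀ R : ℝ, ∃ C, ∀ n t, t ∈ Metric.closedBall (0:ℝ) R → ‖f n t‖ ≤ C * |m * l| ^ n := by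
    intro R
    obtain ⟨C, hC⟩ := (isCompact_closedBall (0:ℝ) R).exists_bound_of_continuousOn hG'.continuousOn
    refine ⟨C, fun n t ht => ?_⟩
    have : l ^ n * t ∈ Metric.closedBall (0:ℝ) R := by
      simp only [mem_closedBall_zero_iff, Real.norm_eq_abs, abs_mul, abs_pow] at ht ⊢
      exact (mul_le_of_le_one_left (abs_nonneg _) (pow_le_one₀ (abs_nonneg _) hl.le)).trans ht
    rw [hf, norm_mul, norm_pow, mul_comm]
    exact mul_le_mul_of_nonneg_right (hC _ this) (by positivity)
  have hsumg : ∀ C : ℝ, Summable (fun n : ℕ => C * |m * l| ^ n) := fun C =>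
    (summable_geometric_of_lt_one (abs_nonneg _) hml).mul_left C
  set w : ℝ → ℝ := fun t => ∑' n, f n t with hw
  have hsum : ∀ t, Summable (fun n => f n t) := by
    intro t
    obtain ⟨C, hC⟩ := hbound |t|
    exact Summable.of_norm_bounded (hsumg C) fun n => hC n t (by simp)
  have hwc : Continuous w := by
    rw [continuous_iff_continuousAt]
    intro t
    obtain ⟨C, hC⟩ := hbound (|t| + 1)
    refine (continuousOn_tsum (fun n => (hfc n).continuousOn) (hsumg C) hC).continuousAt ?_
    refine mem_of_superset (Metric.isOpen_ball.mem_nhds ?_) Metric.ball_subset_closedBall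
    simp
  have hweq : ∀ t, w t = (m * l) * w (l * t) + deriv G t := by
    intro t
    rw [hw]
    simp only
    rw [(hsum t).tsum_eq_zero_add, ← tsum_mul_left, add_comm]
    congr 1
    · refine tsum_congr fun n => ?_
      simp only [hf, pow_succ]
      rw [show l ^ n * l * t = l ^ n * (l * t) by ring]
      ring
    · simp [hf]
  refine ⟨w, hwc, ?_, hweq⟩
  set V : ℝ → ℝ := fun t => ∫ x in (0:ℝ)..t, w x with hV
  have hVd : ∀ t, HasDerivAt V (w t) t := fun t => hwc.integral_hasStrictDerivAt 0 t |>.hasDerivAt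
  have hVc : Continuous V := continuous_iff_continuousAt.2 fun t => (hVd t).continuousAt
  have hGd : ∀ t, HasDerivAt G (deriv G t) t := fun t =>
    (hG.differentiable one_ne_zero t).hasDerivAt
  have hconst : ∀ t, V t - m * V (l * t) - G t = - G 0 := by
    have hd : ∀ t, HasDerivAt (fun t => V t - m * V (l * t) - G t) 0 t := by
      intro t
      have h1 : HasDerivAt (fun t => V (l * t)) (w (l * t) * l) t :=
        (hVd (l * t)).comp t (by simpa using (hasDerivAt_id t).const_mul l)
      refine (((hVd t).sub (h1.const_mul m)).sub (hGd t)).congr_deriv ?_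
      rw [hweq t]; ring
    intro t
    have := is_const_of_deriv_eq_zero (fun t => (hd t).differentiableAt) (fun t => (hd t).deriv) t 0
    rw [this]; simp [hV]
  have he := aux_e l m hl hm (fun t => v t - V t) (hv.sub hVc) (G 0) (fun t => by
    have := hconst t
    rw [h t]; linarith)
  have hvV : v = fun t => V t + v 0 := by
    funext t
    have := he t
    simp [hV] at this
    simp only [hV]; linarith
  intro t
  rw [hvV]
  exact (hVd t).add_const _

lemma aux_lin (k : ℕ) : ∀ (l m : ℝ) (_ : |l| < 1) (_ : |m| ≤ 1) (G v : ℝ → ℝ) (_ : ContDiff ℝ k G)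
    (_ : Continuous v) (_ : ∀ t, v t = m * v (l * t) + G t), ContDiff ℝ k v := by
  induction k with
  | zero => intro l m hl hm G v hG hv h; simpa using hv
  | succ k ih =>
    intro l m hl hm G v hG hv h
    push_cast at hG ⊢
    obtain ⟨w, hwc, hd, hw⟩ := aux_deriv l m hl hm G v (hG.of_le (by simp)) hv h
    rw [contDiff_succ_iff_deriv] at hG ⊢
    refine ⟨fun t => (hd t).differentiableAt, by simp, ?_⟩
    rw [show deriv v = w from funext fun t => (hd t).deriv]
    refine ih l (m * l) hl ?_ _ w hG.2.2 hwc hw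
    rw [abs_mul]
    exact mul_le_one₀ hm (abs_nonneg _) hl.le

/-- Complexification of a real analytic germ. -/
lemma aux_complexify (f : ℝ → ℝ) (p : ℝ) (hf : AnalyticAt ℝ f p) :
    ∃ F : ℂ → ℂ, AnalyticAt ℂ F p ∧ ∀ᶠ x : ℝ in 𝓝 p, F x = f x := by
  obtain ⟨q, hq⟩ := hf
  obtain ⟨r, hr⟩ := hq
  obtain ⟨C, a, hC, ha, hle⟩ := q.le_mul_pow_of_radius_pos (hr.r_pos.trans_le hr.r_le)
  set F : ℂ → ℂ := fun z => ∑' n, (q.coeff n : ℂ) * (z - p) ^ n with hF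
  have hR : 0 < (2 * a)⁻¹ := by positivity
  have hco : ∀ n, |q.coeff n| ≤ C * a ^ n := fun n => by
    rw [← Real.norm_eq_abs, ← FormalMultilinearSeries.norm_apply_eq_norm_coef]; exact hle n
  have hdiff : DifferentiableOn ℂ F (Metric.ball (p:ℂ) (2 * a)⁻¹) := by
    refine Complex.differentiableOn_tsum_of_summable_norm (u := fun n => C * (1/2)^n)
      (summable_geometric_two.mul_left C) (fun n => by fun_prop) Metric.isOpen_ball ?_
    intro n z hz
    rw [norm_mul, norm_pow, Complex.norm_real, Real.norm_eq_abs]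
    have h1 : ‖z - p‖ ≤ (2 * a)⁻¹ := (mem_ball_iff_norm.1 hz).le
    calc |q.coeff n| * ‖z - p‖ ^ n ≤ (C * a ^ n) * ((2 * a)⁻¹) ^ n := by
          gcongr
          exact hco n
      _ = C * (1/2)^n := by
          rw [mul_assoc, ← mul_pow]; congr 2; field_simp
  refine ⟨F, hdiff.analyticAt (Metric.ball_mem_nhds _ hR), ?_⟩
  have := hr.eventually_hasSum_sub
  filter_upwards [this] with x hx
  have h2 : HasSum (fun n => q.coeff n * (x - p) ^ n) (f x) := by
    simpa [FormalMultilinearSeries.apply_eq_pow_smul_coeff, mul_comm] using hx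
  have h3 : HasSum (fun n => (q.coeff n : ℂ) * ((x:ℂ) - p) ^ n) (f x : ℂ) := by
    simpa using Complex.hasSum_ofReal.2 h2
  exact h3.tsum_eq

lemma aux_quad (F : ℂ → ℂ) (p d : ℂ) (hF : AnalyticAt ℂ F p) (hd : HasDerivAt F d p)
    (hp : F p = p) :
    ∃ C > 0, ∀ᶠ z in 𝓝 p, ‖F z - p - d * (z - p)‖ ≤ C * ‖z - p‖ ^ 2 := by
  obtain ⟨q, hq⟩ := hF
  have h := hq.isBigO_sub_partialSum_pow 2
  have h1 : q 1 (fun _ => 1) = d := hq.hasDerivAt.unique hd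
  have h0 : ∀ v, q 0 v = p := fun v => by rw [hq.coeff_zero, hp]
  obtain ⟨C, hC, hb⟩ := h.exists_pos
  refine ⟨C, hC, ?_⟩
  have ht : Tendsto (fun z => z - p) (𝓝 p) (𝓝 0) := by
    have : Continuous (fun z => z - p) := by fun_prop
    simpa using this.tendsto p
  filter_upwards [ht.eventually hb.bound] with z hz
  have h2 : q.partialSum 2 (z - p) = p + d * (z - p) := by
    simp only [FormalMultilinearSeries.partialSum, Finset.sum_range_succ, Finset.sum_range_zero,
      zero_add, h0]
    rw [FormalMultilinearSeries.apply_eq_pow_smul_coeff, FormalMultilinearSeries.coeff]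
    rw [show (1 : Fin 1 → ℂ) = fun _ => 1 from rfl, h1]
    simp [mul_comm]
  rw [h2] at hz
  simpa [sub_sub] using hz

lemma aux_koenigs (S φ : ℝ → ℝ) (p D : ℝ) (hD : 2 ≤ |D|) (hS : AnalyticAt ℝ S p) (hp : S p = p)
    (hd : HasDerivAt S D⁻¹ p)
    (hlim : ∀ x, Tendsto (fun n : ℕ => D ^ n * (S^[n] x - p)) atTop (𝓝 (φ x))) :
    AnalyticAt ℝ φ p := by
  have hD0 : D ≠ 0 := by rintro rfl; norm_num at hD
  have hDc : (D : ℂ) ≠ 0 := by exact_mod_cast hD0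
  obtain ⟨F, hF, hFS⟩ := aux_complexify S p hS
  have hFp : F p = p := by rw [hFS.self_of_nhds, hp]
  have hFd : HasDerivAt F (D : ℂ)⁻¹ p := by
    have h1 := hF.differentiableAt.hasDerivAt
    have h2 : HasDerivAt (fun x : ℝ => F x) (deriv F p) p := h1.comp_ofReal
    have h3 : HasDerivAt (fun x : ℝ => (S x : ℂ)) ((D⁻¹ : ℝ) : ℂ) p := hd.ofReal_comp
    have h4 := h2.unique (h3.congr_of_eventuallyEq hFS)
    rw [h4] at h1
    simpa using h1
  obtain ⟨C, hC, hE⟩ := aux_quad F p _ hF hFd hFp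
  obtain ⟨e1, he1, hb1⟩ := Metric.eventually_nhds_iff_ball.1 (hE.and hF.eventually_analyticAt)
  obtain ⟨e2, he2, hb2⟩ := Metric.eventually_nhds_iff_ball.1 hFS
  have hDp : 0 < |D| := by linarith
  set e : ℝ := min (min e1 e2) (1 / (5 * |D| * C)) with he
  have hepos : 0 < e := by positivity
  have hee1 : e ≤ e1 := (min_le_left _ _).trans (min_le_left _ _)
  have hee2 : e ≤ e2 := (min_le_left _ _).trans (min_le_right _ _)
  have hee3 : C * e ≤ 1 / (5 * |D|) := by
    have : e ≤ 1 / (5 * |D| * C) := min_le_right _ _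
    calc C * e ≤ C * (1 / (5 * |D| * C)) := by gcongr
      _ = _ := by field_simp
  set B := Metric.ball (p : ℂ) e with hB
  set E : ℂ → ℂ := fun z => F z - p - (D : ℂ)⁻¹ * (z - p) with hEdef
  have hEb : ∀ z ∈ B, ‖E z‖ ≤ C * ‖z - p‖ ^ 2 := fun z hz =>
    (hb1 z (Metric.ball_subset_ball hee1 hz)).1
  set ρ : ℝ := 6 / (5 * |D|) with hρ
  have hρ0 : 0 < ρ := by positivity
  have hρ1 : ρ ≤ 1 := by rw [hρ, div_le_one (by positivity)]; linarith
  have hFb : ∀ z ∈ B, ‖F z - p‖ ≤ ρ * ‖z - p‖ := by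
    intro z hz
    have hz' : ‖z - p‖ ≤ e := (mem_ball_iff_norm.1 hz).le
    have h1 : F z - p = E z + (D : ℂ)⁻¹ * (z - p) := by simp [hEdef]
    have h2 : ‖(D : ℂ)⁻¹ * (z - p)‖ = 1 / |D| * ‖z - p‖ := by simp
    calc ‖F z - p‖ ≤ ‖E z‖ + ‖(D : ℂ)⁻¹ * (z - p)‖ := by rw [h1]; exact norm_add_le _ _
      _ ≤ C * ‖z - p‖ ^ 2 + 1 / |D| * ‖z - p‖ := by rw [h2]; gcongr; exact hEb z hz
      _ ≤ (1 / (5 * |D|)) * ‖z - p‖ + 1 / |D| * ‖z - p‖ := by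
          have h3 : C * ‖z - p‖ ^ 2 ≤ (1 / (5 * |D|)) * ‖z - p‖ := by
            calc C * ‖z - p‖ ^ 2 = (C * ‖z - p‖) * ‖z - p‖ := by ring
              _ ≤ (C * e) * ‖z - p‖ := by gcongr
              _ ≤ _ := by gcongr
          linarith
      _ = ρ * ‖z - p‖ := by rw [hρ]; field_simp; norm_num
  have hmaps : MapsTo F B B := by
    intro z hz
    have h1 := hFb z hz
    rw [hB, mem_ball_iff_norm] at hz ⊢
    exact (h1.trans (mul_le_of_le_one_left (norm_nonneg _) hρ1)).trans_lt hz
  have hmapsn : ∀ n, MapsTo F^[n] B B := fun n => hmaps.iterate n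
  have hFn : ∀ n, ∀ z ∈ B, ‖F^[n] z - p‖ ≤ ρ ^ n * e := by
    intro n
    induction n with
    | zero => intro z hz; simpa using (mem_ball_iff_norm.1 hz).le
    | succ n ih =>
      intro z hz
      rw [Function.iterate_succ_apply']
      calc _ ≤ ρ * ‖F^[n] z - p‖ := hFb _ (hmapsn n hz)
        _ ≤ ρ * (ρ ^ n * e) := by gcongr; exact ih z hz
        _ = _ := by ring
  have hFdiff : DifferentiableOn ℂ F B := fun z hz =>
    (hb1 z (Metric.ball_subset_ball hee1 hz)).2.differentiableAt.differentiableWithinAt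
  have hFndiff : ∀ n, DifferentiableOn ℂ F^[n] B := by
    intro n
    induction n with
    | zero => simpa using differentiableOn_id
    | succ n ih => rw [Function.iterate_succ']; exact hFdiff.comp ih (hmapsn n)
  set g : ℕ → ℂ → ℂ := fun n z => (D : ℂ) ^ (n + 1) * E (F^[n] z) with hg
  have hgdiff : ∀ n, DifferentiableOn ℂ (g n) B := by
    intro n
    have hEd : DifferentiableOn ℂ E B := by
      refine (hFdiff.sub (differentiableOn_const _)).sub ?_
      fun_prop
    exact (hEd.comp (hFndiff n) (hmapsn n)).const_mul _
  have hgb : ∀ n, ∀ z ∈ B, ‖g n z‖ ≤ (|D| * C * e ^ 2) * (|D| * ρ ^ 2) ^ n := by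
    intro n z hz
    have h1 := hEb _ (hmapsn n hz)
    have h2 := hFn n z hz
    calc ‖g n z‖ = |D| ^ (n + 1) * ‖E (F^[n] z)‖ := by simp [hg]
      _ ≤ |D| ^ (n + 1) * (C * (ρ ^ n * e) ^ 2) := by
          gcongr
          exact h1.trans (by gcongr)
      _ = _ := by ring
  have hgs : Summable (fun n : ℕ => (|D| * C * e ^ 2) * (|D| * ρ ^ 2) ^ n) := by
    refine (summable_geometric_of_lt_one (by positivity) ?_).mul_left _
    have : |D| * ρ ^ 2 = 36 / (25 * |D|) := by rw [hρ]; field_simp; norm_num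
    rw [this, div_lt_one (by positivity)]
    linarith
  have hsd := Complex.differentiableOn_tsum_of_summable_norm hgs hgdiff Metric.isOpen_ball hgb
  set Φ : ℂ → ℂ := fun z => (z - p) + ∑' n, g n z with hΦ
  have hΦd : DifferentiableOn ℂ Φ B := by
    refine DifferentiableOn.add ?_ hsd
    fun_prop
  have hΦa : AnalyticAt ℂ Φ p := hΦd.analyticAt (Metric.ball_mem_nhds _ hepos)
  have hpart : ∀ n z, ∑ i ∈ Finset.range n, g i z = (D : ℂ) ^ n * (F^[n] z - p) - (z - p) := by
    intro n z
    induction n with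
    | zero => simp
    | succ n ih =>
      rw [Finset.sum_range_succ, ih, Function.iterate_succ_apply']
      simp only [hg, hEdef]
      field_simp
      ring
  have hreal : ∀ x : ℝ, (x : ℂ) ∈ B → Φ x = φ x := by
    intro x hx
    have hiter : ∀ n, F^[n] (x : ℂ) = (S^[n] x : ℝ) := by
      intro n
      induction n with
      | zero => simp
      | succ n ih =>
        have hm := hmapsn n hx
        rw [Function.iterate_succ_apply', Function.iterate_succ_apply', ih]
        rw [ih] at hm
        refine hb2 _ ?_
        have h5 := Metric.ball_subset_ball hee2 hm
        rw [mem_ball_iff_norm] at h5 ⊢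
        rwa [← Complex.ofReal_sub, Complex.norm_real] at h5
    have hs : Summable (fun n => g n x) := Summable.of_norm_bounded hgs fun n => hgb n x hx
    have h6 := hs.hasSum.tendsto_sum_nat
    have h7 : Tendsto (fun n : ℕ => ((D ^ n * (S^[n] x - p) : ℝ) : ℂ) - (x - p)) atTop
        (𝓝 ((φ x : ℂ) - (x - p))) :=
      ((Complex.continuous_ofReal.tendsto _).comp (hlim x)).sub_const _
    have h8 := tendsto_nhds_unique h6 (h7.congr fun n => by rw [hpart, hiter]; push_cast; ring)
    simp only [hΦ]
    rw [h8]; ring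
  have hev : ∀ᶠ x : ℝ in 𝓝 p, (x : ℂ) ∈ B :=
    (Complex.continuous_ofReal.tendsto p).eventually (Metric.ball_mem_nhds _ hepos)
  refine hΦa.re_ofReal.congr ?_
  filter_upwards [hev] with x hx
  rw [hreal x hx]; simp

lemma aux_construct (D : ℤ) (hD : 2 ≤ |D|)
    (That : ℝ → ℝ) (hTC : ContDiff ℝ 1 That)
    (hTdeg : ∀ x, That (x + 1) = That x + D)
    (hTexp : ∀ x, 1 < |deriv That x|)
    (u : ℝ → ℝ) (hu : Continuous u) (huper : Function.Periodic u 1)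
    (c : ℝ) (hcoh : ∀ x, Real.log |deriv That x| = u (That x) - u x + c) :
    ∃ φ ψ : ℝ → ℝ, Continuous ψ ∧ (∀ x, 0 < ψ x) ∧ (∀ x, HasDerivAt φ (ψ x) x) ∧
      (∀ x, φ (x + 1) = φ x + 1) ∧
      (∀ x, φ (That x) = (D : ℝ) * φ x) ∧ c = Real.log (D : ℝ) := by
  have hTc : Continuous (deriv That) := hTC.continuous_deriv le_rfl
  have hTd : ∀ x, HasDerivAt That (deriv That x) x := fun x =>
    (hTC.differentiable one_ne_zero x).hasDerivAt
  have hne : ∀ x, deriv That x ≠ 0 := fun x h0 => by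
    have := hTexp x
    rw [h0] at this
    norm_num at this
  obtain ⟨σ, hσ1, hσ⟩ : ∃ σ : ℝ, |σ| = 1 ∧ ∀ x, deriv That x = σ * |deriv That x| := by
    rcases lt_or_gt_of_ne (hne 0) with h | h
    · refine ⟨-1, by simp, fun x => ?_⟩
      have : deriv That x < 0 := by
        by_contra! hx
        obtain ⟨y, hy⟩ := mem_range_of_exists_le_of_exists_ge hTc ⟨0, h.le⟩ ⟨x, hx⟩
        exact hne y hy
      rw [abs_of_neg this]; ring
    · refine ⟨1, by simp, fun x => ?_⟩
      have : 0 < deriv That x := by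
        by_contra! hx
        obtain ⟨y, hy⟩ := mem_range_of_exists_le_of_exists_ge hTc ⟨x, hx⟩ ⟨0, h.le⟩
        exact hne y hy
      rw [abs_of_pos this]; ring
  have hec : Continuous (fun x => Real.exp (-u x)) := by fun_prop
  set K : ℝ := ∫ x in (0:ℝ)..1, Real.exp (-u x) with hK
  have hKpos : 0 < K := intervalIntegral.intervalIntegral_pos_of_pos
    (hec.intervalIntegrable _ _) (fun x => Real.exp_pos _) one_pos
  set ψ : ℝ → ℝ := fun x => Real.exp (-u x) / K with hψ
  have hψc : Continuous ψ := by fun_prop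
  have hψpos : ∀ x, 0 < ψ x := fun x => by positivity
  have hψint : ∫ x in (0:ℝ)..1, ψ x = 1 := by
    simp only [hψ]
    rw [intervalIntegral.integral_div, ← hK, div_self hKpos.ne']
  have hψper : Function.Periodic ψ 1 := fun x => by simp only [hψ]; rw [huper x]
  set φ0 : ℝ → ℝ := fun x => ∫ t in (0:ℝ)..x, ψ t with hφ0
  have hφd : ∀ x, HasDerivAt φ0 (ψ x) x := fun x => (hψc.integral_hasStrictDerivAt 0 x).hasDerivAt
  have hφ1 : ∀ x, φ0 (x + 1) = φ0 x + 1 := by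
    intro x
    have h1 : φ0 (x + 1) = φ0 x + ∫ t in x..(x + 1), ψ t :=
      (intervalIntegral.integral_add_adjacent_intervals (hψc.intervalIntegrable _ _)
        (hψc.intervalIntegrable _ _)).symm
    have h2 := hψper.intervalIntegral_add_eq x 0
    rw [zero_add, hψint] at h2
    rw [h1, h2]
  have hφn : ∀ (n : ℤ) x, φ0 (x + n) = φ0 x + n := by
    have hp : Function.Periodic (fun x => φ0 x - x) 1 := fun x => by
      simp only [hφ1]; ring
    intro n x
    have := hp.int_mul n x
    simp only [mul_one] at this
    linarith
  have hkey : ∀ x, ψ (That x) * deriv That x = σ * Real.exp c * ψ x := by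
    intro x
    have h1 : |deriv That x| = Real.exp (u (That x) - u x + c) := by
      rw [← hcoh x, Real.exp_log (abs_pos.2 (hne x))]
    rw [hσ x, h1]
    simp only [hψ]
    have h2 : Real.exp (-u (That x)) * Real.exp (u (That x) - u x + c)
        = Real.exp c * Real.exp (-u x) := by
      rw [← Real.exp_add, ← Real.exp_add]; congr 1; ring
    field_simp
    linear_combination σ * h2
  have hconst : ∀ x, φ0 (That x) - σ * Real.exp c * φ0 x = φ0 (That 0) - σ * Real.exp c * φ0 0 := by
    have hd : ∀ x, HasDerivAt (fun x => φ0 (That x) - σ * Real.exp c * φ0 x) 0 x := by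
      intro x
      refine (((hφd (That x)).comp x (hTd x)).sub ((hφd x).const_mul (σ * Real.exp c))).congr_deriv ?_
      rw [hkey x, sub_self]
    intro x
    exact is_const_of_deriv_eq_zero (fun t => (hd t).differentiableAt) (fun t => (hd t).deriv) x 0
  have hDe : (D : ℝ) = σ * Real.exp c := by
    have h1 := hconst (0 + 1)
    rw [hTdeg, hφn, hφ1] at h1
    linarith
  have hD1 : (D : ℝ) - 1 ≠ 0 := by
    intro h
    have h1 : (D : ℝ) = 1 := by linarith
    have h2 : D = 1 := by exact_mod_cast h1
    rw [h2] at hD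
    norm_num at hD
  refine ⟨fun x => φ0 x + (φ0 (That 0) - σ * Real.exp c * φ0 0) / (D - 1), ψ, hψc, hψpos,
    fun x => (hφd x).add_const _, fun x => ?_, fun x => ?_, ?_⟩
  · simp only [hφ1]; ring
  · have h1 := hconst x
    rw [← hDe] at h1 ⊢
    field_simp
    linear_combination ((D:ℝ) - 1) * h1
  · rw [← Real.log_abs, hDe, abs_mul, hσ1, one_mul, Real.abs_exp, Real.log_exp]

theorem stmt_17 (r : WithTop ℕ∞) (hr : 1 ≤ r)
    (D : ℤ) (hD : 2 ≤ |D|)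
    (That : ℝ → ℝ) (hTC : ContDiff ℝ r That)
    (hTdeg : ∀ x, That (x + 1) = That x + D)
    (hTexp : ∀ x, 1 < |deriv That x|)
    (u : ℝ → ℝ) (hu : Continuous u) (huper : Function.Periodic u 1)
    (c : ℝ) (hcoh : ∀ x, Real.log |deriv That x| = u (That x) - u x + c) :
    ∃ φ : ℝ → ℝ, ContDiff ℝ r φ ∧ StrictMono φ ∧
      (∀ x, φ (x + 1) = φ x + 1) ∧ (∀ x, 0 < deriv φ x) ∧
      (∀ x, φ (That x) = (D : ℝ) * φ x) ∧ c = Real.log (D : ℝ) := by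
  obtain ⟨φ, ψ, hψc, hψpos, hφd, hφ1, hφT, hc⟩ :=
    aux_construct D hD That (hTC.of_le hr) hTdeg hTexp u hu huper c hcoh
  have hdφ : deriv φ = ψ := funext fun x => (hφd x).deriv
  have hmono : StrictMono φ := strictMono_of_deriv_pos fun x => by rw [hdφ]; exact hψpos x
  have hφc : Continuous φ := continuous_iff_continuousAt.2 fun x => (hφd x).continuousAt
  refine ⟨φ, ?_, hmono, hφ1, fun x => by rw [hdφ]; exact hψpos x, hφT, hc⟩
  have hsurj : Function.Surjective φ :=
    (CircleDeg1Lift.continuous_iff_surjective ⟨⟨φ, hmono.monotone⟩, hφ1⟩).1 hφc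
  set e : ℝ ≃ₜ ℝ := (hmono.orderIsoOfSurjective φ hsurj).toHomeomorph with he
  have heφ : ∀ x, e x = φ x := fun x => rfl
  set h : ℝ → ℝ := fun t => e.symm t with hh
  have hφh : ∀ t, φ (h t) = t := fun t => e.apply_symm_apply t
  have hhφ : ∀ x, h (φ x) = x := fun x => e.symm_apply_apply x
  have hDR : 2 ≤ |(D : ℝ)| := by exact_mod_cast hD
  have hD0 : (D : ℝ) ≠ 0 := by intro h0; rw [h0] at hDR; norm_num at hDR
  have hTh : ∀ t, That (h t) = h (D * t) := fun t => by
    apply hmono.injective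
    rw [hφT, hφh, hφh]
  have hhc : Continuous h := e.symm.continuous
  have hhd : ∀ t, HasDerivAt h (ψ (h t))⁻¹ t := fun t =>
    HasDerivAt.of_local_left_inverse hhc.continuousAt (hφd (h t)) (hψpos _).ne'
      (Eventually.of_forall hφh)
  have hTd : ∀ x, HasDerivAt That (deriv That x) x := fun x =>
    ((hTC.of_le hr).differentiable one_ne_zero x).hasDerivAt
  have hne : ∀ x, deriv That x ≠ 0 := fun x h0 => by
    have := hTexp x
    rw [h0] at this
    norm_num at this
  have hkey : ∀ t, deriv That (h t) * (ψ (h t))⁻¹ = (ψ (h (D * t)))⁻¹ * D := by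
    intro t
    have h1 : HasDerivAt (fun t => That (h t)) (deriv That (h t) * (ψ (h t))⁻¹) t :=
      (hTd (h t)).comp t (hhd t)
    have h2 : HasDerivAt (fun t => h (D * t)) ((ψ (h (D * t)))⁻¹ * D) t :=
      (hhd (D * t)).comp t (by simpa using (hasDerivAt_id t).const_mul (D:ℝ))
    rw [show (fun t => That (h t)) = fun t => h (D * t) from funext hTh] at h1
    exact h1.unique h2
  have hlinv : |(D : ℝ)⁻¹| < 1 := by
    rw [abs_inv]; exact inv_lt_one_of_one_lt₀ (by linarith)
  -- finite regularity of the inverse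
  have hfin : ∀ k : ℕ, ContDiff ℝ (k + 1) That → ContDiff ℝ (k + 1) h := by
    intro k
    induction k with
    | zero =>
      intro _
      rw [contDiff_succ_iff_deriv]
      refine ⟨fun t => (hhd t).differentiableAt, by simp, ?_⟩
      rw [show deriv h = fun t => (ψ (h t))⁻¹ from funext fun t => (hhd t).deriv]
      simp only [Nat.cast_zero, contDiff_zero]
      exact (hψc.comp hhc).inv₀ fun t => (hψpos _).ne'
    | succ k ih =>
      intro hT
      push_cast at hT ⊢
      have hhk : ContDiff ℝ (k + 1) h := ih (hT.of_le (by simp))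
      have hT' : ContDiff ℝ (k + 1) (deriv That) := (contDiff_succ_iff_deriv.1 hT).2.2
      have hl : ContDiff ℝ (k + 1) (fun t => - Real.log (ψ (h t))) := by
        have := aux_lin (k + 1) (D : ℝ)⁻¹ 1 hlinv (by simp)
          (fun t => Real.log (deriv That (h ((D : ℝ)⁻¹ * t))) - Real.log (D : ℝ))
          (fun t => - Real.log (ψ (h t))) ?_ ?_ ?_
        · exact_mod_cast this
        · push_cast
          refine ContDiff.sub (ContDiff.log ?_ fun t => hne _) contDiff_const
          exact hT'.comp (hhk.comp (contDiff_const.mul contDiff_id))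
        · exact ((hψc.comp hhc).log fun t => (hψpos _).ne').neg
        · intro t
          have h1 := hkey ((D : ℝ)⁻¹ * t)
          rw [mul_inv_cancel_left₀ hD0] at h1
          have h2 := congrArg Real.log h1
          rw [Real.log_mul (hne _) (inv_ne_zero (hψpos _).ne'),
            Real.log_mul (inv_ne_zero (hψpos _).ne') hD0, Real.log_inv, Real.log_inv] at h2
          linarith
      rw [contDiff_succ_iff_deriv]
      refine ⟨fun t => (hhd t).differentiableAt, fun h0 => ?_, ?_⟩
      · exact absurd h0 (by exact_mod_cast WithTop.natCast_ne_top (k + 1))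
      rw [show deriv h = fun t => Real.exp (- Real.log (ψ (h t))) from funext fun t => by
        rw [(hhd t).deriv, Real.exp_neg, Real.exp_log (hψpos _)]]
      exact hl.exp
  have hfin' : ∀ k : ℕ, ContDiff ℝ (k + 1) That → ContDiff ℝ (k + 1) φ := fun k hk =>
    e.symm.contDiff_symm_deriv (fun t => inv_ne_zero (hψpos (h t)).ne') hhd (hfin k hk)
  have hnat : ∀ m : ℕ, (m : WithTop ℕ∞) ≤ r → ContDiff ℝ m φ := by
    intro m hm
    cases m with
    | zero => simpa using hφc
    | succ k =>
      push_cast at hm ⊢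
      exact hfin' k (hTC.of_le hm)
  induction r using WithTop.recTopCoe with
  | coe n =>
    rw [contDiff_iff_forall_nat_le]
    intro m hm
    exact hnat m (by exact_mod_cast hm)
  | top =>
    -- the analytic case
    let S : ℝ → ℝ := fun x => h ((D : ℝ)⁻¹ * φ x)
    have hTS : ∀ x, That (S x) = x := fun x => by
      simp only [S]; rw [hTh, mul_inv_cancel_left₀ hD0, hhφ]
    have hST : ∀ x, S (That x) = x := fun x => by
      simp only [S]; rw [hφT, inv_mul_cancel_left₀ hD0, hhφ]
    have hSc : Continuous S := by fun_prop
    let eT : ℝ ≃ₜ ℝ := ⟨⟨That, S, hST, hTS⟩, hTC.continuous, hSc⟩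
    have hSa : ContDiff ℝ ⊤ S := eT.contDiff_symm_deriv hne hTd hTC
    have hSn : ∀ n x, S^[n] x = h (((D : ℝ)⁻¹) ^ n * φ x) := by
      intro n x
      induction n with
      | zero => simp [hhφ]
      | succ n ih =>
        rw [Function.iterate_succ_apply', ih]
        simp only [S]
        rw [hφh]; congr 1; ring
    have hpow : ∀ x, Tendsto (fun n : ℕ => ((D : ℝ)⁻¹) ^ n * φ x) atTop (𝓝 0) := fun x => by
      simpa using (tendsto_pow_atTop_nhds_zero_of_abs_lt_one hlinv).mul_const (φ x)
    have hSd : HasDerivAt S (D : ℝ)⁻¹ (h 0) := by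
      have h1 : HasDerivAt (fun x => (D : ℝ)⁻¹ * φ x) ((D : ℝ)⁻¹ * ψ (h 0)) (h 0) :=
        (hφd (h 0)).const_mul _
      have h2 := (hhd ((D : ℝ)⁻¹ * φ (h 0))).comp (h 0) h1
      refine h2.congr_deriv ?_
      rw [hφh, mul_zero]
      have := (hψpos (h 0)).ne'
      field_simp
    have hlim : ∀ x, Tendsto (fun n : ℕ => (D : ℝ) ^ n * (S^[n] x - h 0)) atTop
        (𝓝 ((ψ (h 0))⁻¹ * φ x)) := by
      intro x
      by_cases hx : φ x = 0
      · simp [hSn, hx]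
      have h1 := (hasDerivAt_iff_tendsto_slope_zero.1 (hhd 0))
      have h2 : Tendsto (fun n : ℕ => ((D : ℝ)⁻¹) ^ n * φ x) atTop (𝓝[≠] 0) := by
        refine tendsto_nhdsWithin_iff.2 ⟨hpow x, Eventually.of_forall fun n => ?_⟩
        exact mul_ne_zero (pow_ne_zero _ (inv_ne_zero hD0)) hx
      have h3 := (h1.comp h2).mul_const (φ x)
      refine h3.congr fun n => ?_
      simp only [Function.comp, hSn, zero_add, smul_eq_mul]
      rw [inv_pow, mul_inv, inv_inv]
      field_simp
    have hA : AnalyticAt ℝ (fun x => (ψ (h 0))⁻¹ * φ x) (h 0) :=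
      aux_koenigs S _ (h 0) D hDR (hSa.contDiffAt.analyticAt) (by simp [S, hφh]) hSd hlim
    have hA' : ∀ᶠ y in 𝓝 (h 0), AnalyticAt ℝ φ y := by
      have h1 : AnalyticAt ℝ φ (h 0) := by
        have h2 : AnalyticAt ℝ (fun x => ψ (h 0) * ((ψ (h 0))⁻¹ * φ x)) (h 0) :=
          analyticAt_const.mul hA
        have := (hψpos (h 0)).ne'
        simpa [mul_inv_cancel_left₀ this] using h2
      exact h1.eventually_analyticAt
    have hSit : ∀ n : ℕ, ContDiff ℝ ⊤ S^[n] := by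
      intro n
      induction n with
      | zero => simpa using contDiff_id
      | succ n ih => rw [Function.iterate_succ']; exact hSa.comp ih
    rw [contDiff_iff_contDiffAt]
    intro x
    have h4 : Tendsto (fun n : ℕ => S^[n] x) atTop (𝓝 (h 0)) := by
      simp only [hSn]
      exact (hhc.tendsto 0).comp (hpow x)
    obtain ⟨n, hn⟩ := (h4.eventually hA').exists
    have h5 : φ = fun y => (D : ℝ) ^ n * φ (S^[n] y) := by
      funext y
      rw [hSn, hφh, inv_pow, mul_inv_cancel_left₀ (pow_ne_zero n hD0)]
    have h6 : ContDiffAt ℝ ⊤ (fun y => (D : ℝ) ^ n * φ (S^[n] y)) x := contDiffAt_const.mul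
      ((hn.contDiffAt (n := ⊤)).comp x (hSit n).contDiffAt)
    exact h6.congr_of_eventuallyEq (Eventually.of_forall fun y => congrFun h5 y)
end
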